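/- arXiv:1810.03186 — 7 statements merged into one kernel-verified Lean document; each statement's English description precedes it below -/
import Mathlib

section
/- Let δ ∈ (0,1), p > 1, and let η : ℝ → ℂⁿ be continuously differentiable with ‖η'‖_{0,p,δ,+} := (∫_0^∞ e^{pδt} ‖η'(t)‖^p dt)^{1/p} < ∞. Then for all R₁, R₂ ≥ 0, (∫_0^∞ e^{pδt} ‖η(t+R₁) − η(t+R₂)‖^p dt)^{1/p} ≤ (|e^{-δR₁} − e^{-δR₂}|/δ) · ‖η'‖_{0,p,δ,+}. -/
open MeasureTheory Set
open scoped ENNReal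

/-- The weighted `L^p` norm `‖f‖_{0,p,δ,+} = (∫_0^∞ e^{pδt} ‖f t‖^p dt)^{1/p}`
on the half-line `[0,∞)`, valued in the extended nonnegative reals. -/
noncomputable def wnormPlus (n : ℕ) (p δ : ℝ) (f : ℝ → (Fin n → ℂ)) : ℝ≥0∞ :=
  (∫⁻ t in Ioi (0:ℝ), ENNReal.ofReal (Real.exp (p * δ * t) * ‖f t‖ ^ p)) ^ (1 / p)

/-!
Put `g(u) = e^{δu} ‖η'(u)‖`. The fundamental theorem of calculus and `e^{δt} = e^{-δs} e^{δ(t+s)}`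
bound the weighted increment `e^{δt} ‖η(t + R₁) - η(t + R₂)‖` by the average of `s ↦ g(t + s)`
against the measure `e^{-δs} ds` on the interval between `R₁` and `R₂`, whose total mass is
`|e^{-δR₁} - e^{-δR₂}| / δ`. By Hölder and Tonelli the `L^p` norm of such an average is at most this
mass times the largest `L^p` norm of a translate of `g`, and moving `[0,∞)` to the right does not
increase the norm over it.
-/

section MinkowskiIntegral

variable {α β : Type*} [MeasurableSpace α] [MeasurableSpace β] {μ : Measure α} {ν : Measure β}

theorem lintegral_rpow_le_measure_univ_rpow_mul {q : ℝ} (hq : 1 ≤ q) {f : β → ℝ≥0∞}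
    (hf : AEMeasurable f ν) :
    (∫⁻ s, f s ∂ν) ^ q ≤ ν univ ^ (q - 1) * ∫⁻ s, f s ^ q ∂ν := by
  have hq₀ : 0 < q := one_pos.trans_le hq
  have holder := eLpNorm'_le_eLpNorm'_mul_rpow_measure_univ one_pos hq hf.aestronglyMeasurable
  simp only [eLpNorm', enorm_eq_self, ENNReal.rpow_one, div_one] at holder
  calc (∫⁻ s, f s ∂ν) ^ q
      ≤ ((∫⁻ s, f s ^ q ∂ν) ^ (1 / q) * ν univ ^ (1 - 1 / q)) ^ q := by gcongr
    _ = ν univ ^ (q - 1) * ∫⁻ s, f s ^ q ∂ν := by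
      rw [ENNReal.mul_rpow_of_nonneg _ _ hq₀.le, ← ENNReal.rpow_mul, ← ENNReal.rpow_mul,
        one_div_mul_cancel hq₀.ne', sub_mul, one_mul, one_div_mul_cancel hq₀.ne',
        ENNReal.rpow_one, mul_comm]

variable [SFinite μ] [SFinite ν] {G : α → β → ℝ≥0∞} {C : ℝ≥0∞}

theorem eLpNorm'_lintegral_le_measure_univ_mul {q : ℝ} (hq : 1 ≤ q)
    (hG : Measurable (Function.uncurry G)) (hC : ∀ᵐ s ∂ν, eLpNorm' (G · s) q μ ≤ C) :
    eLpNorm' (fun t ↦ ∫⁻ s, G t s ∂ν) q μ ≤ ν univ * C := by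
  have hq₀ : 0 < q := one_pos.trans_le hq
  have hGq : Measurable (Function.uncurry fun t s ↦ G t s ^ q) := hG.pow_const q
  have slice_le : ∀ᵐ s ∂ν, ∫⁻ t, G t s ^ q ∂μ ≤ C ^ q := by
    filter_upwards [hC] with s hs
    rwa [eLpNorm', one_div, ENNReal.rpow_inv_le_iff hq₀] at hs
  rw [eLpNorm', one_div, ENNReal.rpow_inv_le_iff hq₀]
  calc ∫⁻ t, (∫⁻ s, G t s ∂ν) ^ q ∂μ
      ≤ ∫⁻ t, ν univ ^ (q - 1) * ∫⁻ s, G t s ^ q ∂ν ∂μ :=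
        lintegral_mono fun t ↦
          lintegral_rpow_le_measure_univ_rpow_mul hq hG.of_uncurry_left.aemeasurable
    _ = ν univ ^ (q - 1) * ∫⁻ t, ∫⁻ s, G t s ^ q ∂ν ∂μ :=
        lintegral_const_mul _ hGq.lintegral_prod_right'
    _ = ν univ ^ (q - 1) * ∫⁻ s, ∫⁻ t, G t s ^ q ∂μ ∂ν := by
        rw [lintegral_lintegral_swap hGq.aemeasurable]
    _ ≤ ν univ ^ (q - 1) * ∫⁻ _, C ^ q ∂ν := by
        gcongr ν univ ^ (q - 1) * ?_
        exact lintegral_mono_ae slice_le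
    _ = ν univ ^ (q - 1) * ν univ ^ (1 : ℝ) * C ^ q := by
        rw [lintegral_const, ENNReal.rpow_one, mul_comm (C ^ q), mul_assoc]
    _ = (ν univ * C) ^ q := by
        rw [← ENNReal.rpow_add_of_nonneg _ _ (sub_nonneg.2 hq) zero_le_one, sub_add_cancel,
          ENNReal.mul_rpow_of_nonneg _ _ hq₀.le]

theorem eLpNormEssSup_lintegral_le_measure_univ_mul (hG : Measurable (Function.uncurry G))
    (hC : ∀ᵐ s ∂ν, eLpNormEssSup (G · s) μ ≤ C) :
    eLpNormEssSup (fun t ↦ ∫⁻ s, G t s ∂ν) μ ≤ ν univ * C := by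
  have slice_le : ∀ᵐ s ∂ν, ∀ᵐ t ∂μ, G t s ≤ C := by
    filter_upwards [hC] with s hs
    filter_upwards [enorm_ae_le_eLpNormEssSup (G · s) μ] with t ht
    exact ht.trans hs
  have slice_le' : ∀ᵐ t ∂μ, ∀ᵐ s ∂ν, G t s ≤ C :=
    (Measure.ae_ae_comm (p := (G · · ≤ C)) (measurableSet_le hG measurable_const)).2 slice_le
  refine essSup_le_of_ae_le _ ?_
  filter_upwards [slice_le'] with t ht
  calc ∫⁻ s, G t s ∂ν ≤ ∫⁻ _, C ∂ν := lintegral_mono_ae ht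
    _ = ν univ * C := by rw [lintegral_const, mul_comm]

theorem eLpNorm_lintegral_le_measure_univ_mul {p : ℝ≥0∞} (hp : 1 ≤ p)
    (hG : Measurable (Function.uncurry G)) (hC : ∀ᵐ s ∂ν, eLpNorm (G · s) p μ ≤ C) :
    eLpNorm (fun t ↦ ∫⁻ s, G t s ∂ν) p μ ≤ ν univ * C := by
  obtain rfl | hp_top := eq_or_ne p ∞
  · simp only [eLpNorm_exponent_top] at hC ⊢
    exact eLpNormEssSup_lintegral_le_measure_univ_mul hG hC
  · have hp₀ : p ≠ 0 := (one_pos.trans_le hp).ne'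
    have hq : 1 ≤ p.toReal := by simpa using ENNReal.toReal_mono hp_top hp
    simp only [eLpNorm_eq_eLpNorm' hp₀ hp_top] at hC ⊢
    exact eLpNorm'_lintegral_le_measure_univ_mul hq hG hC

end MinkowskiIntegral

section Translation

variable {A : Type*} [AddGroup A] [MeasurableSpace A] [MeasurableAdd₂ A] {μ ν : Measure A}
  [SFinite μ] [SFinite ν] [μ.IsAddRightInvariant] {p : ℝ≥0∞} {g : A → ℝ≥0∞}

theorem eLpNorm_lintegral_comp_add_le (hp : 1 ≤ p) (hg : Measurable g) :
    eLpNorm (fun t ↦ ∫⁻ s, g (t + s) ∂ν) p μ ≤ ν univ * eLpNorm g p μ :=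
  eLpNorm_lintegral_le_measure_univ_mul hp (hg.comp measurable_add) <| .of_forall fun s ↦
    (eLpNorm_comp_measurePreserving hg.aestronglyMeasurable
      (measurePreserving_add_right μ s)).le

theorem eLpNorm_restrict_lintegral_comp_add_le (hp : 1 ≤ p) {S : Set A} (hS : MeasurableSet S)
    (hν : ∀ᵐ s ∂ν, ∀ t ∈ S, t + s ∈ S) (hg : Measurable (S.indicator g)) :
    eLpNorm (fun t ↦ ∫⁻ s, g (t + s) ∂ν) p (μ.restrict S) ≤
      ν univ * eLpNorm g p (μ.restrict S) := by
  have indicator_eq : ∀ t ∈ S, ∫⁻ s, g (t + s) ∂ν = ∫⁻ s, S.indicator g (t + s) ∂ν := by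
    intro t ht
    refine lintegral_congr_ae ?_
    filter_upwards [hν] with s hs
    rw [indicator_of_mem (hs t ht)]
  calc eLpNorm (fun t ↦ ∫⁻ s, g (t + s) ∂ν) p (μ.restrict S)
      = eLpNorm (fun t ↦ ∫⁻ s, S.indicator g (t + s) ∂ν) p (μ.restrict S) :=
        eLpNorm_congr_ae (ae_restrict_of_forall_mem hS indicator_eq)
    _ ≤ eLpNorm (fun t ↦ ∫⁻ s, S.indicator g (t + s) ∂ν) p μ :=
        eLpNorm_mono_measure _ Measure.restrict_le_self
    _ ≤ ν univ * eLpNorm (S.indicator g) p μ := eLpNorm_lintegral_comp_add_le hp hg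
    _ = ν univ * eLpNorm g p (μ.restrict S) := by
        rw [eLpNorm_indicator_eq_eLpNorm_restrict hS]

end Translation

theorem measurable_indicator_of_continuousOn {X Y : Type*} [TopologicalSpace X]
    [MeasurableSpace X] [OpensMeasurableSpace X] [TopologicalSpace Y] [MeasurableSpace Y]
    [BorelSpace Y] [Zero Y] {S : Set X} {f : X → Y} (hS : MeasurableSet S)
    (hf : ContinuousOn f S) : Measurable (S.indicator f) := by
  classical
  rw [← piecewise_eq_indicator]
  exact hf.measurable_piecewise continuousOn_const hS

/-- The measure `e^{-δs} ds` on the interval between `a` and `b`, in either order: averaging the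
translates of `e^{δ·} η'` against it dominates the weighted increments of `η`. -/
noncomputable def expDecayMeasure (δ a b : ℝ) : Measure ℝ :=
  (volume.restrict (uIoc a b)).withDensity fun s ↦ ENNReal.ofReal (Real.exp (-δ * s))

instance (δ a b : ℝ) : SFinite (expDecayMeasure δ a b) := by
  unfold expDecayMeasure
  infer_instance

theorem ae_expDecayMeasure_mem_uIoc (δ a b : ℝ) : ∀ᵐ s ∂expDecayMeasure δ a b, s ∈ uIoc a b :=
  (withDensity_absolutelyContinuous _ _).ae_le (ae_restrict_mem measurableSet_uIoc)

theorem lintegral_expDecayMeasure (δ a b : ℝ) (g : ℝ → ℝ≥0∞) :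
    ∫⁻ s, g s ∂expDecayMeasure δ a b =
      ∫⁻ s in uIoc a b, ENNReal.ofReal (Real.exp (-δ * s)) * g s :=
  lintegral_withDensity_eq_lintegral_mul_non_measurable _ (by fun_prop)
    (.of_forall fun _ ↦ ENNReal.ofReal_lt_top) g

theorem expDecayMeasure_univ {δ : ℝ} (hδ : δ ≠ 0) (a b : ℝ) :
    expDecayMeasure δ a b univ =
      ENNReal.ofReal |(Real.exp (-δ * a) - Real.exp (-δ * b)) / δ| := by
  have hint : IntervalIntegrable (fun s ↦ Real.exp (-δ * s)) volume a b :=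
    (by fun_prop : Continuous fun s ↦ Real.exp (-δ * s)).intervalIntegrable a b
  have hpos : 0 ≤ ∫ s in uIoc a b, Real.exp (-δ * s) :=
    integral_nonneg fun s ↦ (Real.exp_pos _).le
  calc expDecayMeasure δ a b univ
      = ∫⁻ s in uIoc a b, ENNReal.ofReal (Real.exp (-δ * s)) := by
        rw [expDecayMeasure, withDensity_apply _ .univ, Measure.restrict_univ]
    _ = ENNReal.ofReal (∫ s in uIoc a b, Real.exp (-δ * s)) :=
        (ofReal_integral_eq_lintegral_ofReal hint.def'
          (.of_forall fun s ↦ (Real.exp_pos _).le)).symm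
    _ = ENNReal.ofReal |∫ s in a..b, Real.exp (-δ * s)| := by
        rw [intervalIntegral.abs_integral_eq_abs_integral_uIoc, abs_of_nonneg hpos]
    _ = ENNReal.ofReal |(Real.exp (-δ * a) - Real.exp (-δ * b)) / δ| := by
        rw [intervalIntegral.integral_comp_mul_left _ (neg_ne_zero.2 hδ), integral_exp, smul_eq_mul,
          inv_mul_eq_div, div_neg, abs_neg, abs_div, abs_sub_comm, ← abs_div]

section HalfLine

variable {E : Type*} [NormedAddCommGroup E] [NormedSpace ℝ E]

theorem enorm_sub_le_setLIntegral_uIoc_enorm_deriv {f : ℝ → E} {a b : ℝ}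
    (hf : ContDiffOn ℝ 1 f (uIcc a b)) : ‖f a - f b‖ₑ ≤ ∫⁻ s in uIoc a b, ‖deriv f s‖ₑ := by
  wlog hab : b ≤ a generalizing a b
  · rw [enorm_sub_rev, uIoc_comm]
    exact this (uIcc_comm a b ▸ hf) (le_of_not_ge hab)
  rw [uIoc_of_ge hab, restrict_Ioc_eq_restrict_Icc]
  exact enorm_sub_le_lintegral_deriv_of_contDiffOn_Icc (uIcc_of_ge hab ▸ hf) hab

/-- The weighted norm `‖f‖_{0,p,δ,+}` for functions with values in an arbitrary normed space,
encoded as the `L^p` norm of `t ↦ e^{δt} f(t)` on the half-line, so that `p = ∞` is allowed. -/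
noncomputable def expWeightedELpNorm (δ : ℝ) (p : ℝ≥0∞) (f : ℝ → E) : ℝ≥0∞ :=
  eLpNorm (fun t ↦ Real.exp (δ * t) • f t) p (volume.restrict (Ioi 0))

theorem wnormPlus_eq_expWeightedELpNorm {n : ℕ} {p : ℝ} (hp : 0 < p) (δ : ℝ)
    (f : ℝ → Fin n → ℂ) :
    wnormPlus n p δ f = expWeightedELpNorm δ (ENNReal.ofReal p) f := by
  have integrand_eq (t : ℝ) : ENNReal.ofReal (Real.exp (p * δ * t) * ‖f t‖ ^ p) =
      ‖Real.exp (δ * t) • f t‖ₑ ^ p := by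
    rw [← ofReal_norm, norm_smul, Real.norm_of_nonneg (Real.exp_pos _).le,
      ENNReal.ofReal_rpow_of_nonneg (by positivity) hp.le,
      Real.mul_rpow (Real.exp_pos _).le (norm_nonneg _), ← Real.exp_mul]
    ring_nf
  simp only [wnormPlus, expWeightedELpNorm, integrand_eq,
    eLpNorm_eq_lintegral_rpow_enorm_toReal (ENNReal.ofReal_pos.2 hp).ne' ENNReal.ofReal_ne_top,
    ENNReal.toReal_ofReal hp.le]

theorem enorm_exp_smul_sub_le_lintegral_expDecayMeasure (δ : ℝ) {η : ℝ → E} {t R₁ R₂ : ℝ}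
    (hη : ContDiffOn ℝ 1 (fun s ↦ η (t + s)) (uIcc R₁ R₂)) :
    ‖Real.exp (δ * t) • (η (t + R₁) - η (t + R₂))‖ₑ ≤
      ∫⁻ s, ‖Real.exp (δ * (t + s)) • deriv η (t + s)‖ₑ ∂expDecayMeasure δ R₁ R₂ := by
  have weight_eq (s : ℝ) : ‖Real.exp (δ * t)‖ₑ * ‖deriv η (t + s)‖ₑ =
      ENNReal.ofReal (Real.exp (-δ * s)) * ‖Real.exp (δ * (t + s)) • deriv η (t + s)‖ₑ := by
    rw [enorm_smul, ← mul_assoc, ← Real.enorm_of_nonneg (Real.exp_pos (-δ * s)).le, ← enorm_mul,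
      ← Real.exp_add]
    ring_nf
  calc ‖Real.exp (δ * t) • (η (t + R₁) - η (t + R₂))‖ₑ
      ≤ ‖Real.exp (δ * t)‖ₑ * ∫⁻ s in uIoc R₁ R₂, ‖deriv (fun s ↦ η (t + s)) s‖ₑ := by
        rw [enorm_smul]
        gcongr
        exact enorm_sub_le_setLIntegral_uIoc_enorm_deriv hη
    _ = ∫⁻ s in uIoc R₁ R₂, ‖Real.exp (δ * t)‖ₑ * ‖deriv η (t + s)‖ₑ := by
        simp only [deriv_comp_const_add]
        exact (lintegral_const_mul' _ _ enorm_ne_top).symm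
    _ = ∫⁻ s, ‖Real.exp (δ * (t + s)) • deriv η (t + s)‖ₑ ∂expDecayMeasure δ R₁ R₂ := by
        rw [lintegral_expDecayMeasure]
        exact lintegral_congr weight_eq

theorem stmt2_general {p : ℝ≥0∞} (hp : 1 ≤ p) {δ : ℝ} (hδ : δ ≠ 0) {η : ℝ → E}
    (hη : ContDiffOn ℝ 1 η (Ioi 0)) {R₁ R₂ : ℝ} (hR₁ : 0 ≤ R₁) (hR₂ : 0 ≤ R₂) :
    expWeightedELpNorm δ p (fun t ↦ η (t + R₁) - η (t + R₂)) ≤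
      ENNReal.ofReal |(Real.exp (-δ * R₁) - Real.exp (-δ * R₂)) / δ| *
        expWeightedELpNorm δ p (deriv η) := by
  let g : ℝ → ℝ≥0∞ := fun u ↦ ‖Real.exp (δ * u) • deriv η u‖ₑ
  have shift_pos : ∀ s ∈ uIcc R₁ R₂, ∀ t ∈ Ioi (0 : ℝ), t + s ∈ Ioi 0 := fun s hs t ht ↦
    add_pos_of_pos_of_nonneg ht ((le_min hR₁ hR₂).trans hs.1)
  have increment_le : ∀ t ∈ Ioi (0 : ℝ), ‖Real.exp (δ * t) • (η (t + R₁) - η (t + R₂))‖ₑ ≤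
      ∫⁻ s, g (t + s) ∂expDecayMeasure δ R₁ R₂ := fun t ht ↦
    enorm_exp_smul_sub_le_lintegral_expDecayMeasure δ <|
      hη.comp (by fun_prop) fun s hs ↦ shift_pos s hs t ht
  have hg : Measurable ((Ioi 0).indicator g) := by
    have hderiv : ContinuousOn (deriv η) (Ioi 0) :=
      hη.continuousOn_deriv_of_isOpen isOpen_Ioi le_rfl
    exact measurable_indicator_of_continuousOn measurableSet_Ioi (by fun_prop)
  calc expWeightedELpNorm δ p (fun t ↦ η (t + R₁) - η (t + R₂))
      ≤ eLpNorm (fun t ↦ ∫⁻ s, g (t + s) ∂expDecayMeasure δ R₁ R₂) p (volume.restrict (Ioi 0)) :=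
        eLpNorm_mono_enorm_ae (ae_restrict_of_forall_mem measurableSet_Ioi increment_le)
    _ ≤ expDecayMeasure δ R₁ R₂ univ * eLpNorm g p (volume.restrict (Ioi 0)) :=
        eLpNorm_restrict_lintegral_comp_add_le hp measurableSet_Ioi
          ((ae_expDecayMeasure_mem_uIoc δ R₁ R₂).mono fun s hs ↦
            shift_pos s (uIoc_subset_uIcc hs)) hg
    _ = ENNReal.ofReal |(Real.exp (-δ * R₁) - Real.exp (-δ * R₂)) / δ| *
          expWeightedELpNorm δ p (deriv η) := by
        rw [expDecayMeasure_univ hδ, eLpNorm_enorm, expWeightedELpNorm]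

end HalfLine

/-- translation-difference estimate of Lemmas 4.3/4.4. For `δ ∈ (0,1)`,
`p > 1`, and `η : ℝ → ℂⁿ` continuously differentiable with `‖η'‖_{0,p,δ,+} < ∞`, for all
`R₁, R₂ ≥ 0`:
`‖τ_{R₁}η − τ_{R₂}η‖_{0,p,δ,+} ≤ (|e^{-δR₁} − e^{-δR₂}|/δ) ‖η'‖_{0,p,δ,+}`. -/
theorem stmt2 (n : ℕ) (δ p : ℝ) (hδ : δ ∈ Ioo (0:ℝ) 1) (hp : 1 < p)
    (η : ℝ → (Fin n → ℂ)) (hη : ContDiff ℝ 1 η)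
    (hη' : wnormPlus n p δ (deriv η) < ⊤)
    (R₁ R₂ : ℝ) (hR₁ : 0 ≤ R₁) (hR₂ : 0 ≤ R₂) :
    wnormPlus n p δ (fun t => η (t + R₁) - η (t + R₂)) ≤
      ENNReal.ofReal (|Real.exp (-δ * R₁) - Real.exp (-δ * R₂)| / δ) *
        wnormPlus n p δ (deriv η) := by
  simpa only [wnormPlus_eq_expWeightedELpNorm (one_pos.trans hp), abs_div, abs_of_pos hδ.1] using
    stmt2_general (ENNReal.one_le_ofReal.2 hp.le) hδ.1.ne' hη.contDiffOn hR₁ hR₂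
end

section
/- Let δ ∈ (0,1) and p > 1. Suppose η, η₁, η₂, … : ℝ → ℂⁿ are measurable with ‖η‖_{0,p,δ,+} < ∞ and ‖ηₙ − η‖_{0,p,δ,+} → 0, and suppose Rₙ, R ≥ 0 with Rₙ → R. Then ‖ηₙ ∘ τ_{Rₙ} − η ∘ τ_R‖_{0,p,δ,+} → 0, i.e. (∫_0^∞ e^{pδt} ‖ηₙ(t+Rₙ) − η(t+R)‖^p dt)^{1/p} → 0 as n → ∞. -/
open MeasureTheory Set Filter
open scoped ENNReal Topology

/-! The weight is an exponential, so `F t = e^{δt} f t` (extended by zero to `t ≤ 0`) turns the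
weighted translation into an unweighted one up to a scalar: `e^{δt} f (t + r) = e^{-δr} F (t + r)`
for `t > 0` and `r ≥ 0`. Joint continuity of the weighted translation thus reduces to the joint
continuity of `(c, r, F) ↦ c • F (· + r)` in `L^p(ℝ)`, which is the strong continuity of
translations there. -/

theorem continuous_addRight {X : Type*} [TopologicalSpace X] [Add X] [ContinuousAdd X] :
    Continuous (ContinuousMap.addRight : X → C(X, X)) :=
  ContinuousMap.continuous_of_continuous_uncurry _ (continuous_snd.add continuous_fst)

section CompMeasurePreserving

variable {ι X Y 𝕜 E : Type*} {l : Filter ι}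
  [TopologicalSpace X] [R1Space X] [MeasurableSpace X] [BorelSpace X]
  [TopologicalSpace Y] [R1Space Y] [MeasurableSpace Y] [BorelSpace Y]
  [NormedRing 𝕜] [NormedAddCommGroup E] [Module 𝕜 E] [IsBoundedSMul 𝕜 E]
  {μ : Measure X} [μ.InnerRegularCompactLTTop] {ν : Measure Y} [IsLocallyFiniteMeasure ν]
  {p : ℝ≥0∞} [Fact (1 ≤ p)] {c : ι → 𝕜} {c₀ : 𝕜} {g : ι → C(X, Y)} {g₀ : C(X, Y)} {f : Y → E}

theorem tendsto_eLpNorm_const_smul_comp_sub (hp : p ≠ ∞) (hf : MemLp f p ν)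
    (hc : Tendsto c l (𝓝 c₀)) (hg : Tendsto g l (𝓝 g₀))
    (hgm : ∀ i, MeasurePreserving (g i) μ ν) (hgm₀ : MeasurePreserving g₀ μ ν) :
    Tendsto (fun i ↦ eLpNorm (c i • (f ∘ g i) - c₀ • (f ∘ g₀)) p μ) l (𝓝 0) := by
  have hLp : Tendsto (fun i ↦ c i • Lp.compMeasurePreserving (g i) (hgm i) (hf.toLp f)) l
      (𝓝 (c₀ • Lp.compMeasurePreserving g₀ hgm₀ (hf.toLp f))) :=
    hc.smul (tendsto_const_nhds.compMeasurePreservingLp hg hgm hgm₀ hp)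
  exact (Lp.tendsto_Lp_iff_tendsto_eLpNorm'' _
    (fun i ↦ (hf.comp_measurePreserving (hgm i)).const_smul (c i)) _
    ((hf.comp_measurePreserving hgm₀).const_smul c₀)).1 hLp

theorem tendsto_eLpNorm_smul_comp_sub (hp : p ≠ ∞) (hf : MemLp f p ν) {fs : ι → Y → E}
    (hfs : ∀ i, AEStronglyMeasurable (fs i) ν)
    (hconv : Tendsto (fun i ↦ eLpNorm (fs i - f) p ν) l (𝓝 0))
    (hc : Tendsto c l (𝓝 c₀)) (hg : Tendsto g l (𝓝 g₀))
    (hgm : ∀ i, MeasurePreserving (g i) μ ν) (hgm₀ : MeasurePreserving g₀ μ ν) :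
    Tendsto (fun i ↦ eLpNorm (c i • (fs i ∘ g i) - c₀ • (f ∘ g₀)) p μ) l (𝓝 0) := by
  have hsub (i : ι) : AEStronglyMeasurable (fs i - f) ν := (hfs i).sub hf.1
  have hbound : Tendsto (fun i ↦ ‖c i‖ₑ * eLpNorm (fs i - f) p ν +
      eLpNorm (c i • (f ∘ g i) - c₀ • (f ∘ g₀)) p μ) l (𝓝 0) := by
    simpa only [mul_zero, add_zero] using
      (ENNReal.Tendsto.mul hc.enorm (.inr ENNReal.zero_ne_top) hconv (.inr enorm_ne_top)).add
        (tendsto_eLpNorm_const_smul_comp_sub hp hf hc hg hgm hgm₀)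
  refine tendsto_of_tendsto_of_tendsto_of_le_of_le tendsto_const_nhds hbound
    (fun _ ↦ zero_le) fun i ↦ ?_
  calc eLpNorm (c i • (fs i ∘ g i) - c₀ • (f ∘ g₀)) p μ
      = eLpNorm (c i • ((fs i - f) ∘ g i) + (c i • (f ∘ g i) - c₀ • (f ∘ g₀))) p μ := by
        rw [Pi.sub_comp, smul_sub, sub_add_sub_cancel]
    _ ≤ eLpNorm (c i • ((fs i - f) ∘ g i)) p μ +
          eLpNorm (c i • (f ∘ g i) - c₀ • (f ∘ g₀)) p μ :=
        eLpNorm_add_le (((hsub i).comp_measurePreserving (hgm i)).const_smul (c i))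
          (((hf.1.comp_measurePreserving (hgm i)).const_smul (c i)).sub
            ((hf.1.comp_measurePreserving hgm₀).const_smul c₀)) Fact.out
    _ ≤ ‖c i‖ₑ * eLpNorm ((fs i - f) ∘ g i) p μ +
          eLpNorm (c i • (f ∘ g i) - c₀ • (f ∘ g₀)) p μ := by
        gcongr
        exact eLpNorm_const_smul_le
    _ = ‖c i‖ₑ * eLpNorm (fs i - f) p ν + eLpNorm (c i • (f ∘ g i) - c₀ • (f ∘ g₀)) p μ := by
        rw [eLpNorm_comp_measurePreserving (hsub i) (hgm i)]

end CompMeasurePreserving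

section ExpWeight

variable {E : Type*} [NormedAddCommGroup E] [NormedSpace ℝ E] (δ : ℝ)

/-- The function `t ↦ e^{δt} f t` on `(0,∞)`, extended by zero to `ℝ`: its unweighted `L^p` norm
is the exponentially weighted `L^p` norm of `f` on the half-line. -/
noncomputable def expWeightExtend (f : ℝ → E) : ℝ → E :=
  (Ioi 0).indicator fun t ↦ Real.exp (δ * t) • f t

/-- The weighted norm `‖f‖_{0,p,δ,+}` for functions with values in a normed space and
`p : ℝ≥0∞`. The weight multiplies `f` instead of the measure, which is meaningful for `p = ∞`
as well. -/
noncomputable def expWeightedNorm (p : ℝ≥0∞) (f : ℝ → E) : ℝ≥0∞ :=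
  eLpNorm (fun t ↦ Real.exp (δ * t) • f t) p (volume.restrict (Ioi 0))

theorem wnormPlus_eq_expWeightedNorm {n : ℕ} {p : ℝ} (hp : 0 < p) (f : ℝ → (Fin n → ℂ)) :
    wnormPlus n p δ f = expWeightedNorm δ (ENNReal.ofReal p) f := by
  rw [expWeightedNorm, eLpNorm_eq_lintegral_rpow_enorm_toReal (ENNReal.ofReal_pos.2 hp).ne'
    ENNReal.ofReal_ne_top, ENNReal.toReal_ofReal hp.le, wnormPlus]
  congr 1
  refine lintegral_congr fun t ↦ ?_
  have hweight : Real.exp (p * δ * t) * ‖f t‖ ^ p = ‖Real.exp (δ * t) • f t‖ ^ p := by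
    rw [norm_smul, Real.norm_of_nonneg (Real.exp_nonneg _),
      Real.mul_rpow (Real.exp_nonneg _) (norm_nonneg _), ← Real.exp_mul]
    ring_nf
  rw [hweight, ← ENNReal.ofReal_rpow_of_nonneg (norm_nonneg _) hp.le, ofReal_norm]

theorem expWeightedNorm_eq_eLpNorm_expWeightExtend (p : ℝ≥0∞) (f : ℝ → E) :
    expWeightedNorm δ p f = eLpNorm (expWeightExtend δ f) p volume :=
  (eLpNorm_indicator_eq_eLpNorm_restrict measurableSet_Ioi).symm

theorem aestronglyMeasurable_expWeightExtend {f : ℝ → E}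
    (hf : AEStronglyMeasurable f (volume.restrict (Ioi 0))) :
    AEStronglyMeasurable (expWeightExtend δ f) volume := by
  have hexp : Continuous fun t : ℝ ↦ Real.exp (δ * t) := by fun_prop
  exact (aestronglyMeasurable_indicator_iff measurableSet_Ioi).2
    (hexp.aestronglyMeasurable.smul hf)

theorem expWeightExtend_sub (f g : ℝ → E) :
    expWeightExtend δ (f - g) = expWeightExtend δ f - expWeightExtend δ g := by
  simp only [expWeightExtend, Pi.sub_apply, smul_sub]
  exact indicator_sub _ _ _

theorem exp_smul_comp_add_right (f : ℝ → E) {r t : ℝ} (h : 0 < t + r) :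
    Real.exp (δ * t) • f (t + r) = Real.exp (-(δ * r)) • expWeightExtend δ f (t + r) := by
  rw [expWeightExtend, indicator_of_mem (mem_Ioi.2 h), smul_smul, ← Real.exp_add]
  ring_nf

theorem expWeightedNorm_comp_add_right_sub_le (p : ℝ≥0∞) (f g : ℝ → E) {r s : ℝ}
    (hr : 0 ≤ r) (hs : 0 ≤ s) :
    expWeightedNorm δ p (fun t ↦ f (t + r) - g (t + s)) ≤
      eLpNorm (Real.exp (-(δ * r)) • (expWeightExtend δ f ∘ ContinuousMap.addRight r) -
        Real.exp (-(δ * s)) • (expWeightExtend δ g ∘ ContinuousMap.addRight s)) p volume := by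
  refine (eLpNorm_congr_ae ?_).trans_le (eLpNorm_restrict_le _ p volume (Ioi 0))
  filter_upwards [ae_restrict_mem measurableSet_Ioi] with t ht
  rw [smul_sub, exp_smul_comp_add_right δ f (add_pos_of_pos_of_nonneg ht hr),
    exp_smul_comp_add_right δ g (add_pos_of_pos_of_nonneg ht hs)]
  rfl

theorem stmt3_general {ι : Type*} {l : Filter ι} {p : ℝ≥0∞} [Fact (1 ≤ p)] (hp : p ≠ ∞)
    {η : ℝ → E} {ηs : ι → ℝ → E} (hη : AEStronglyMeasurable η (volume.restrict (Ioi 0)))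
    (hηs : ∀ i, AEStronglyMeasurable (ηs i) (volume.restrict (Ioi 0)))
    (hηfin : expWeightedNorm δ p η < ∞)
    (hconv : Tendsto (fun i ↦ expWeightedNorm δ p (ηs i - η)) l (𝓝 0))
    {R : ℝ} {Rs : ι → ℝ} (hR : 0 ≤ R) (hRs : ∀ i, 0 ≤ Rs i) (hRconv : Tendsto Rs l (𝓝 R)) :
    Tendsto (fun i ↦ expWeightedNorm δ p fun t ↦ ηs i (t + Rs i) - η (t + R)) l (𝓝 0) := by
  have hF : MemLp (expWeightExtend δ η) p volume :=
    ⟨aestronglyMeasurable_expWeightExtend δ hη,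
      (expWeightedNorm_eq_eLpNorm_expWeightExtend δ p η).symm.trans_lt hηfin⟩
  have hFconv : Tendsto (fun i ↦ eLpNorm (expWeightExtend δ (ηs i) - expWeightExtend δ η) p volume)
      l (𝓝 0) := by
    simpa only [expWeightedNorm_eq_eLpNorm_expWeightExtend, expWeightExtend_sub] using hconv
  have hexp : Tendsto (fun i ↦ Real.exp (-(δ * Rs i))) l (𝓝 (Real.exp (-(δ * R)))) :=
    (hRconv.const_mul δ).neg.rexp
  have hshift : Tendsto (fun i ↦ ContinuousMap.addRight (Rs i)) l (𝓝 (ContinuousMap.addRight R)) :=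
    (continuous_addRight.tendsto R).comp hRconv
  refine tendsto_of_tendsto_of_tendsto_of_le_of_le tendsto_const_nhds ?_ (fun _ ↦ zero_le)
    fun i ↦ expWeightedNorm_comp_add_right_sub_le δ p (ηs i) η (hRs i) hR
  exact tendsto_eLpNorm_smul_comp_sub hp hF
    (fun i ↦ aestronglyMeasurable_expWeightExtend δ (hηs i)) hFconv hexp hshift
    (fun i ↦ measurePreserving_add_right volume (Rs i)) (measurePreserving_add_right volume R)

end ExpWeight

/-- Lemma 4.3. For `δ ∈ (0,1)`, `p > 1`, measurable `η, η₁, η₂, …`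
with `‖η‖_{0,p,δ,+} < ∞` and `‖ηₖ − η‖_{0,p,δ,+} → 0`, and `Rₖ, R ≥ 0` with `Rₖ → R`,
one has `‖ηₖ ∘ τ_{Rₖ} − η ∘ τ_R‖_{0,p,δ,+} → 0`. -/
theorem stmt3 (n : ℕ) (δ p : ℝ) (hδ : δ ∈ Ioo (0:ℝ) 1) (hp : 1 < p)
    (η : ℝ → (Fin n → ℂ)) (ηs : ℕ → ℝ → (Fin n → ℂ))
    (hη : Measurable η) (hηs : ∀ k, Measurable (ηs k))
    (hηfin : wnormPlus n p δ η < ⊤)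
    (hconv : Tendsto (fun k => wnormPlus n p δ (fun t => ηs k t - η t)) atTop (𝓝 0))
    (R : ℝ) (Rs : ℕ → ℝ) (hR : 0 ≤ R) (hRs : ∀ k, 0 ≤ Rs k)
    (hRconv : Tendsto Rs atTop (𝓝 R)) :
    Tendsto (fun k => wnormPlus n p δ (fun t => ηs k (t + Rs k) - η (t + R)))
      atTop (𝓝 0) := by
  have : Fact (1 ≤ ENNReal.ofReal p) := ⟨ENNReal.one_le_ofReal.2 hp.le⟩
  simp only [wnormPlus_eq_expWeightedNorm δ (one_pos.trans hp)] at hηfin hconv ⊢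
  exact stmt3_general δ ENNReal.ofReal_ne_top hη.aestronglyMeasurable
    (fun k ↦ (hηs k).aestronglyMeasurable) hηfin hconv hR hRs hRconv
end

section
/- Let δ ∈ (0,1), p > 1, and let ξ : ℝ → ℂⁿ be continuously differentiable with ‖ξ‖_{1,p,δ,+} := ‖ξ‖_{0,p,δ,+} + ‖ξ'‖_{0,p,δ,+} ≤ 1. Then for every R ≥ 0, ‖ξ ∘ τ_R‖_{0,p,δ,+} = (∫_0^∞ e^{pδt} ‖ξ(t+R)‖^p dt)^{1/p} ≤ e^{-δR}. -/
open MeasureTheory Set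
open scoped ENNReal

section Translation

variable {G : Type*} [AddCommGroup G] [LinearOrder G] [IsOrderedAddMonoid G]
  [MeasurableSpace G] [MeasurableAdd G]

theorem setLIntegral_Ioi_comp_add_right (μ : Measure G) [μ.IsAddRightInvariant]
    (f : G → ℝ≥0∞) (a r : G) :
    ∫⁻ t in Ioi a, f (t + r) ∂μ = ∫⁻ t in Ioi (a + r), f t ∂μ := by
  simpa only [preimage_add_const_Ioi, add_sub_cancel_right] using
    (measurePreserving_add_right μ r).setLIntegral_comp_preimage_emb
      (measurableEmbedding_addRight r) f (Ioi (a + r))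

end Translation

theorem setLIntegral_Ioi_exp_mul_comp_add_right (c a r : ℝ) (g : ℝ → ℝ) :
    ∫⁻ t in Ioi a, ENNReal.ofReal (Real.exp (c * t) * g (t + r)) =
      ENNReal.ofReal (Real.exp (-(c * r))) *
        ∫⁻ t in Ioi (a + r), ENNReal.ofReal (Real.exp (c * t) * g t) := by
  have exp_split (t : ℝ) :
      Real.exp (c * t) = Real.exp (-(c * r)) * Real.exp (c * (t + r)) := by
    rw [← Real.exp_add]
    ring_nf
  simp_rw [← setLIntegral_Ioi_comp_add_right volume _ a r,
    ← lintegral_const_mul' _ _ ENNReal.ofReal_ne_top, ← ENNReal.ofReal_mul (Real.exp_pos _).le,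
    ← mul_assoc, ← exp_split]

section WeightedNorm

variable {n : ℕ} {p : ℝ} (δ : ℝ) (ξ : ℝ → (Fin n → ℂ))

theorem wnormPlus_comp_add_right (hp : 0 < p) (R : ℝ) :
    wnormPlus n p δ (fun t => ξ (t + R)) =
      ENNReal.ofReal (Real.exp (-δ * R)) *
        (∫⁻ t in Ioi R, ENNReal.ofReal (Real.exp (p * δ * t) * ‖ξ t‖ ^ p)) ^ (1 / p) := by
  have exponent_eq : -(p * δ * R) * (1 / p) = -δ * R := by field_simp
  rw [wnormPlus, setLIntegral_Ioi_exp_mul_comp_add_right (p * δ) 0 R (fun t => ‖ξ t‖ ^ p),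
    zero_add, ENNReal.mul_rpow_of_nonneg _ _ (one_div_pos.2 hp).le,
    ENNReal.ofReal_rpow_of_pos (Real.exp_pos _), ← Real.exp_mul, exponent_eq]

theorem stmt4_general (hp : 0 < p) {R : ℝ} (hR : 0 ≤ R) :
    wnormPlus n p δ (fun t => ξ (t + R)) ≤
      ENNReal.ofReal (Real.exp (-δ * R)) * wnormPlus n p δ ξ := by
  rw [wnormPlus_comp_add_right δ ξ hp, wnormPlus]
  gcongr

end WeightedNorm

/-- Corollary 4.5. For `δ ∈ (0,1)`, `p > 1`, and `ξ : ℝ → ℂⁿ`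
continuously differentiable with `‖ξ‖_{1,p,δ,+} = ‖ξ‖_{0,p,δ,+} + ‖ξ'‖_{0,p,δ,+} ≤ 1`,
for every `R ≥ 0` one has `‖ξ ∘ τ_R‖_{0,p,δ,+} ≤ e^{-δR}`. -/
theorem stmt4 (n : ℕ) (δ p : ℝ) (hδ : δ ∈ Ioo (0:ℝ) 1) (hp : 1 < p)
    (ξ : ℝ → (Fin n → ℂ)) (hξ : ContDiff ℝ 1 ξ)
    (hnorm : wnormPlus n p δ ξ + wnormPlus n p δ (deriv ξ) ≤ 1)
    (R : ℝ) (hR : 0 ≤ R) :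
    wnormPlus n p δ (fun t => ξ (t + R)) ≤ ENNReal.ofReal (Real.exp (-δ * R)) :=
  (stmt4_general δ ξ (zero_lt_one.trans hp) hR).trans
    (mul_le_of_le_one_right' (le_self_add.trans hnorm))
end

section
/- Let δ ∈ (0,1), p > 1, R > 0, and let u : ℝ → ℂⁿ be continuously differentiable with ‖u‖_{0,p,δ,+} < ∞ and ‖u'‖_{0,p,δ,+} < ∞. Then lim_{s → 0} (1/|s|) · (∫_0^∞ e^{pδt} ‖u(t+R+s) − u(t+R) − s·u'(t+R)‖^p dt)^{1/p} = 0; that is, the map s ↦ u ∘ τ_{R+s} into the weighted L^p space is differentiable at s = 0 with derivative u' ∘ τ_R. -/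
open MeasureTheory Set Filter
open scoped ENNReal Topology

/-! Translation acts strongly continuously on `L^p(ℝ)` for `1 ≤ p < ∞`. Passing from `f` to
`e^{δt} f(t)` turns translation by `x` into translation by `x` followed by multiplication by
`e^{-δx}`, so it is also strongly continuous in the weighted norm. By Taylor's formula the
difference quotient of `u ∘ τ_R` differs from `u' ∘ τ_R` by the average over `r ∈ [0,1]` of
`u' ∘ τ_{R+rs} - u' ∘ τ_R`. The weighted norm of an average is at most the supremum of the
averaged norms, and by strong continuity this supremum tends to `0` with `s`. -/

theorem eLpNorm_lintegral_le_of_ae_eLpNorm_le {α β : Type*} [MeasurableSpace α]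
    [MeasurableSpace β] {μ : Measure α} [SFinite μ] {ν : Measure β} [IsProbabilityMeasure ν]
    {p : ℝ≥0∞} (hp : 1 ≤ p) (hp_top : p ≠ ∞) {F : α → β → ℝ≥0∞}
    (hF : Measurable (Function.uncurry F)) {C : ℝ≥0∞}
    (hC : ∀ᵐ y ∂ν, eLpNorm (fun x ↦ F x y) p μ ≤ C) :
    eLpNorm (fun x ↦ ∫⁻ y, F x y ∂ν) p μ ≤ C := by
  have hp_ne : p ≠ 0 := (zero_lt_one.trans_le hp).ne'
  have hp_pos : 0 < p.toReal := ENNReal.toReal_pos hp_ne hp_top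
  have jensen (x : α) : (∫⁻ y, F x y ∂ν) ^ p.toReal ≤ ∫⁻ y, F x y ^ p.toReal ∂ν := by
    have h := eLpNorm_le_eLpNorm_of_exponent_le hp
      (hF.of_uncurry_left (x := x)).aestronglyMeasurable (μ := ν)
    rwa [eLpNorm_one_eq_lintegral_enorm, eLpNorm_eq_lintegral_rpow_enorm_toReal hp_ne hp_top,
      one_div, ENNReal.le_rpow_inv_iff hp_pos] at h
  rw [eLpNorm_eq_lintegral_rpow_enorm_toReal hp_ne hp_top, one_div,
    ENNReal.rpow_inv_le_iff hp_pos]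
  calc ∫⁻ x, (∫⁻ y, F x y ∂ν) ^ p.toReal ∂μ
      ≤ ∫⁻ x, ∫⁻ y, F x y ^ p.toReal ∂ν ∂μ := lintegral_mono jensen
    _ = ∫⁻ y, ∫⁻ x, F x y ^ p.toReal ∂μ ∂ν :=
        lintegral_lintegral_swap (hF.pow_const p.toReal).aemeasurable
    _ ≤ ∫⁻ _, C ^ p.toReal ∂ν := by
        refine lintegral_mono_ae (hC.mono fun y hy ↦ ?_)
        rwa [eLpNorm_eq_lintegral_rpow_enorm_toReal hp_ne hp_top, one_div,
          ENNReal.rpow_inv_le_iff hp_pos] at hy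
    _ = C ^ p.toReal := by simp

theorem tendsto_eLpNorm_smul_translate_sub {G E : Type*} [AddGroup G] [TopologicalSpace G]
    [IsTopologicalAddGroup G] [MeasurableSpace G] [BorelSpace G]
    {μ : Measure G} [IsLocallyFiniteMeasure μ] [μ.InnerRegularCompactLTTop]
    [μ.IsAddLeftInvariant] [NormedAddCommGroup E] [NormedSpace ℝ E] {p : ℝ≥0∞} (hp : 1 ≤ p)
    (hp_top : p ≠ ∞) {c : G → ℝ} (hc : Continuous c) {g : G → E} (hg : MemLp g p μ) (a : G) :
    Tendsto (fun x ↦ eLpNorm (fun t ↦ c x • g (x + t) - c a • g (a + t)) p μ) (𝓝 a) (𝓝 0) := by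
  have : Fact (1 ≤ p) := ⟨hp⟩
  have : Fact (p ≠ ∞) := ⟨hp_top⟩
  have htranslate (x : G) : MemLp (fun t ↦ g (x + t)) p μ :=
    hg.comp_measurePreserving (measurePreserving_vadd x μ)
  have hcont : Continuous fun x ↦ c x • (DomAddAct.mk x +ᵥ hg.toLp g) :=
    hc.smul ((show Continuous fun x : G ↦ DomAddAct.mk x by fun_prop).vadd continuous_const)
  refine (tendsto_iff_edist_tendsto_0.mp (hcont.tendsto a)).congr fun x ↦ ?_
  exact Lp.edist_toLp_toLp _ _ ((htranslate x).const_smul (c x)) ((htranslate a).const_smul (c a))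

section NormedSpace

variable {E : Type*} [NormedAddCommGroup E]

theorem memLp_restrict_Ioi_of_continuous {μ : Measure ℝ} [IsLocallyFiniteMeasure μ] {f : ℝ → E}
    (hf : Continuous f) {p : ℝ≥0∞} (hp : p ≠ 0) (hp_top : p ≠ ∞) {b : ℝ}
    (hfb : MemLp f p (μ.restrict (Ioi b))) (a : ℝ) : MemLp f p (μ.restrict (Ioi a)) := by
  rw [← integrable_norm_rpow_iff hf.aestronglyMeasurable hp hp_top] at hfb ⊢
  have hcont : Continuous fun t ↦ ‖f t‖ ^ p.toReal :=
    hf.norm.rpow_const fun _ ↦ .inr ENNReal.toReal_nonneg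
  have hunion : IntegrableOn (fun t ↦ ‖f t‖ ^ p.toReal) (Ioc a b ∪ Ioi b) μ :=
    hcont.integrableOn_Ioc.union hfb
  exact hunion.mono_set Ioi_subset_Ioc_union_Ioi

variable [NormedSpace ℝ E]

theorem enorm_taylor_remainder_le_lintegral {u : ℝ → E} (hu : ContDiff ℝ 1 u) (a s : ℝ) :
    ‖u (a + s) - u a - s • deriv u a‖ₑ ≤
      ‖s‖ₑ * ∫⁻ r in Icc (0 : ℝ) 1, ‖deriv u (a + r * s) - deriv u a‖ₑ := by
  have hderiv (r : ℝ) : HasDerivAt (fun r : ℝ ↦ u (a + r * s) - r • s • deriv u a)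
      (s • (deriv u (a + r * s) - deriv u a)) r := by
    have hline : HasDerivAt (fun r : ℝ ↦ a + r * s) s r := by
      simpa using ((hasDerivAt_id r).mul_const s).const_add a
    have hu' := (hu.differentiable one_ne_zero (a + r * s)).hasDerivAt.scomp r hline
    simpa [smul_sub, Function.comp_def] using!
      hu'.sub ((hasDerivAt_id r).smul_const (s • deriv u a))
  have hsmooth : ContDiff ℝ 1 fun r : ℝ ↦ u (a + r * s) - r • s • deriv u a := by fun_prop
  calc ‖u (a + s) - u a - s • deriv u a‖ₑ
      ≤ ∫⁻ r in Icc (0 : ℝ) 1, ‖s • (deriv u (a + r * s) - deriv u a)‖ₑ := by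
        simpa [(hderiv _).deriv, sub_right_comm] using
          enorm_sub_le_lintegral_deriv_of_contDiffOn_Icc hsmooth.contDiffOn zero_le_one
    _ = ‖s‖ₑ * ∫⁻ r in Icc (0 : ℝ) 1, ‖deriv u (a + r * s) - deriv u a‖ₑ := by
        simp_rw [enorm_smul]
        exact lintegral_const_mul' _ _ enorm_ne_top

/-- The weighted norm `‖f‖_{0,p,δ,+}` for functions with values in a normed space. The weight
`e^{pδt}` is moved inside the norm as a factor `e^{δt}`, which makes this an unweighted `L^p`
seminorm on the half-line. -/
noncomputable def expLpNorm (p : ℝ≥0∞) (δ : ℝ) (f : ℝ → E) : ℝ≥0∞ :=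
  eLpNorm (fun t ↦ Real.exp (δ * t) • f t) p (volume.restrict (Ioi 0))

theorem expLpNorm_taylor_remainder_le {p : ℝ≥0∞} (hp : 1 ≤ p) (hp_top : p ≠ ∞) {δ R s : ℝ}
    {u : ℝ → E} (hu : ContDiff ℝ 1 u) {C : ℝ≥0∞}
    (hC : ∀ r ∈ Icc (0 : ℝ) 1,
      expLpNorm p δ (fun t ↦ deriv u (t + R + r * s) - deriv u (t + R)) ≤ C) :
    expLpNorm p δ (fun t ↦ u (t + R + s) - u (t + R) - s • deriv u (t + R)) ≤ ‖s‖ₑ * C := by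
  have : Continuous (deriv u) := hu.continuous_deriv le_rfl
  let F (t r : ℝ) : ℝ≥0∞ := ‖Real.exp (δ * t) • (deriv u (t + R + r * s) - deriv u (t + R))‖ₑ
  have hF : Measurable (Function.uncurry F) := by
    refine Continuous.measurable ?_
    unfold F Function.uncurry
    fun_prop
  have : IsProbabilityMeasure (volume.restrict (Icc (0 : ℝ) 1)) := ⟨by simp⟩
  have hmean : eLpNorm (fun t ↦ ∫⁻ r in Icc (0 : ℝ) 1, F t r) p (volume.restrict (Ioi 0)) ≤ C :=
    eLpNorm_lintegral_le_of_ae_eLpNorm_le hp hp_top hF <|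
      (ae_restrict_mem measurableSet_Icc).mono fun r hr ↦ (eLpNorm_enorm _).trans_le (hC r hr)
  have hpointwise (t : ℝ) :
      ‖Real.exp (δ * t) • (u (t + R + s) - u (t + R) - s • deriv u (t + R))‖ₑ ≤
        ‖s‖ₑ * ∫⁻ r in Icc (0 : ℝ) 1, F t r := by
    simp_rw [F, enorm_smul]
    rw [lintegral_const_mul' _ _ enorm_ne_top, mul_left_comm]
    gcongr
    exact enorm_taylor_remainder_le_lintegral hu (t + R) s
  exact (eLpNorm_le_nnreal_smul_eLpNorm_of_ae_le_mul' (.of_forall hpointwise) p).trans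
    (mul_le_mul_right hmean _)

theorem tendsto_expLpNorm_translate_sub {p : ℝ≥0∞} (hp : 1 ≤ p) (hp_top : p ≠ ∞) {δ : ℝ}
    {v : ℝ → E} (hv : Continuous v) (hfin : expLpNorm p δ v < ∞) (R : ℝ) :
    Tendsto (fun h ↦ expLpNorm p δ (fun t ↦ v (t + R + h) - v (t + R))) (𝓝 0) (𝓝 0) := by
  -- Cutting off at `R - 1` leaves the values at `t + R + h` unchanged for `t > 0` and `|h| < 1`.
  let g : ℝ → E := (Ioi (R - 1)).indicator fun t ↦ Real.exp (δ * t) • v t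
  have hweighted : Continuous fun t ↦ Real.exp (δ * t) • v t := by fun_prop
  have hg : MemLp g p :=
    (memLp_indicator_iff_restrict measurableSet_Ioi).mpr <|
      memLp_restrict_Ioi_of_continuous hweighted (zero_lt_one.trans_le hp).ne' hp_top
        ⟨hweighted.aestronglyMeasurable, hfin⟩ _
  have hunweight {h t : ℝ} (hh : -1 < h) (ht : 0 < t) :
      Real.exp (-(δ * (R + h))) • g (R + h + t) = Real.exp (δ * t) • v (t + R + h) := by
    have hmem : R + h + t ∈ Ioi (R - 1) := by rw [mem_Ioi]; linarith
    simp only [g]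
    rw [indicator_of_mem hmem, smul_smul, ← Real.exp_add]
    congr 2 <;> ring
  have hlim : Tendsto (fun h ↦ eLpNorm (fun t ↦ Real.exp (-(δ * (R + h))) • g (R + h + t) -
      Real.exp (-(δ * R)) • g (R + t)) p) (𝓝 0) (𝓝 0) :=
    (tendsto_eLpNorm_smul_translate_sub hp hp_top (c := fun x ↦ Real.exp (-(δ * x)))
      (by fun_prop) hg R).comp
      (by simpa using (continuous_const_add R).tendsto 0)
  refine tendsto_of_tendsto_of_tendsto_of_le_of_le' tendsto_const_nhds hlim
    (.of_forall fun _ ↦ zero_le) ?_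
  filter_upwards [eventually_gt_nhds (show (-1 : ℝ) < 0 by simp)] with h hh
  refine (eLpNorm_congr_ae ?_).trans_le (eLpNorm_restrict_le _ _ _ _)
  filter_upwards [ae_restrict_mem measurableSet_Ioi] with t ht
  have hbase := hunweight (h := 0) (by simp) ht
  rw [add_zero, add_zero] at hbase
  rw [hunweight hh ht, hbase, smul_sub]

theorem stmt6_general {p : ℝ≥0∞} (hp : 1 ≤ p) (hp_top : p ≠ ∞) (δ R : ℝ) {u : ℝ → E}
    (hu : ContDiff ℝ 1 u) (hu'fin : expLpNorm p δ (deriv u) < ∞) :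
    Tendsto (fun s : ℝ ↦ ‖s‖ₑ⁻¹ *
        expLpNorm p δ (fun t ↦ u (t + R + s) - u (t + R) - s • deriv u (t + R)))
      (𝓝[≠] 0) (𝓝 0) := by
  have hlim := tendsto_expLpNorm_translate_sub hp hp_top (hu.continuous_deriv le_rfl) hu'fin R
  refine ENNReal.tendsto_nhds_zero.mpr fun ε hε ↦ ?_
  obtain ⟨η, hη, hball⟩ :=
    Metric.eventually_nhds_iff_ball.mp (ENNReal.tendsto_nhds_zero.mp hlim ε hε)
  filter_upwards [self_mem_nhdsWithin, nhdsWithin_le_nhds (Metric.ball_mem_nhds 0 hη)]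
    with s hs hsη
  have hsegment : ∀ r ∈ Icc (0 : ℝ) 1, r * s ∈ Metric.ball (0 : ℝ) η := fun r hr ↦
    (convex_ball 0 η).smul_mem_of_zero_mem (Metric.mem_ball_self hη) hsη hr
  calc ‖s‖ₑ⁻¹ * expLpNorm p δ (fun t ↦ u (t + R + s) - u (t + R) - s • deriv u (t + R))
      ≤ ‖s‖ₑ⁻¹ * (‖s‖ₑ * ε) := by
        gcongr
        exact expLpNorm_taylor_remainder_le hp hp_top hu fun r hr ↦ hball _ (hsegment r hr)
    _ = ε := ENNReal.inv_mul_cancel_left (enorm_ne_zero.mpr hs) enorm_ne_top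

end NormedSpace

theorem wnormPlus_eq_expLpNorm (n : ℕ) {p : ℝ} (hp : 0 < p) (δ : ℝ) (f : ℝ → (Fin n → ℂ)) :
    wnormPlus n p δ f = expLpNorm (ENNReal.ofReal p) δ f := by
  rw [wnormPlus, expLpNorm, eLpNorm_eq_lintegral_rpow_enorm_toReal (by simpa using hp) (by simp),
    ENNReal.toReal_ofReal hp.le]
  congr 2 with t
  rw [← ofReal_norm, ENNReal.ofReal_rpow_of_nonneg (norm_nonneg _) hp.le, norm_smul,
    Real.norm_eq_abs, Real.abs_exp, Real.mul_rpow (Real.exp_pos _).le (norm_nonneg _),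
    ← Real.exp_mul]
  ring_nf

/-- Lemma 4.8. For `δ ∈ (0,1)`, `p > 1`, `R > 0`, and `u : ℝ → ℂⁿ`
continuously differentiable with `‖u‖_{0,p,δ,+} < ∞` and `‖u'‖_{0,p,δ,+} < ∞`:
`lim_{s → 0} (1/|s|) ‖u ∘ τ_{R+s} − u ∘ τ_R − s · u' ∘ τ_R‖_{0,p,δ,+} = 0`,
i.e. `s ↦ u ∘ τ_{R+s}` is differentiable at `s = 0` with derivative `u' ∘ τ_R`. -/
theorem stmt6 (n : ℕ) (δ p : ℝ) (hδ : δ ∈ Ioo (0:ℝ) 1) (hp : 1 < p) (R : ℝ) (hR : 0 < R)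
    (u : ℝ → (Fin n → ℂ)) (hu : ContDiff ℝ 1 u)
    (hufin : wnormPlus n p δ u < ⊤) (hu'fin : wnormPlus n p δ (deriv u) < ⊤) :
    Tendsto
      (fun s : ℝ => (1 / |s|) *
        (wnormPlus n p δ (fun t => u (t + R + s) - u (t + R) - s • deriv u (t + R))).toReal)
      (𝓝[≠] (0:ℝ)) (𝓝 0) := by
  simp only [wnormPlus_eq_expLpNorm n (zero_lt_one.trans hp)] at hu'fin ⊢
  simpa [Function.comp_def] using (ENNReal.tendsto_toReal ENNReal.zero_ne_top).comp
    (stmt6_general (by simpa using hp.le) ENNReal.ofReal_ne_top δ R hu hu'fin)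
end

section
/- Let δ ∈ (0,1), p > 1, R > 0, and let u : ℝ → ℂⁿ be continuously differentiable with ‖u'‖_{0,p,δ,+} < ∞. Then for every s with |s| < R, (∫_0^∞ e^{pδt} ‖u(t+R+s) − u(t+R) − s·u'(t+R)‖^p dt)^{1/p} ≤ |s| · ∫_0^1 (∫_0^∞ e^{pδt} ‖u'(t+vs+R) − u'(t+R)‖^p dt)^{1/p} dv. -/
open MeasureTheory Set
open scoped ENNReal

/-!
By Taylor's formula with integral remainder,
`u (x + s) - u x - s • u' x = s • ∫₀¹ (u' (x + v * s) - u' x) dv`. Taking norms at `x = t + R`,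
the `L^p` norm of the left side is at most `|s|` times that of
`t ↦ ∫₀¹ ‖u' (t + R + v * s) - u' (t + R)‖ dv`, and Minkowski's integral inequality moves the `L^p`
norm inside the integral over `v`.

To prove Minkowski's inequality for a kernel `F t v` and `p > 1`, put `G t = ∫ F t v dv`, let
`H ≤ G`, and apply Hölder's inequality in `t` to `∫ H ^ p ≤ ∫∫ F t v * H t ^ (p - 1) dt dv`. One
then divides by a power of `∫ H ^ p`, which has to be finite; this is why `H` runs over minorants
of `G` instead of being `G` itself.
-/

section MinkowskiIntegral

variable {α β : Type*} [MeasurableSpace α] [MeasurableSpace β]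
  {μ : Measure α} {ν : Measure β} {p : ℝ} {F : α → β → ℝ≥0∞}

theorem lintegral_rpow_le_lintegral_lintegral_mul_rpow [SFinite μ] [SFinite ν] (hp : 1 ≤ p)
    (hF : AEMeasurable (Function.uncurry F) (μ.prod ν))
    {H : α → ℝ≥0∞} (hH : AEMeasurable H μ) (hHF : ∀ t, H t ≤ ∫⁻ v, F t v ∂ν) :
    ∫⁻ t, H t ^ p ∂μ ≤ ∫⁻ v, ∫⁻ t, F t v * H t ^ (p - 1) ∂μ ∂ν :=
  calc
    ∫⁻ t, H t ^ p ∂μ = ∫⁻ t, H t * H t ^ (p - 1) ∂μ :=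
      lintegral_congr fun t => by
        simpa using ENNReal.rpow_add_of_nonneg (x := H t) 1 (p - 1) zero_le_one (sub_nonneg.2 hp)
    _ ≤ ∫⁻ t, ∫⁻ v, F t v * H t ^ (p - 1) ∂ν ∂μ :=
      lintegral_mono fun t =>
        (mul_le_mul_left (hHF t) _).trans (lintegral_mul_const_le _ _)
    _ = ∫⁻ v, ∫⁻ t, F t v * H t ^ (p - 1) ∂μ ∂ν :=
      lintegral_lintegral_swap (hF.mul (hH.comp_fst.pow_const _))

theorem eLpNorm'_le_lintegral_eLpNorm'_of_le_lintegral [SFinite μ] [SFinite ν] (hp : 1 < p)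
    (hF : AEMeasurable (Function.uncurry F) (μ.prod ν))
    {H : α → ℝ≥0∞} (hH : AEMeasurable H μ) (hHF : ∀ t, H t ≤ ∫⁻ v, F t v ∂ν)
    (hfin : ∫⁻ t, H t ^ p ∂μ ≠ ⊤) :
    eLpNorm' H p μ ≤ ∫⁻ v, eLpNorm' (F · v) p μ ∂ν := by
  simp only [eLpNorm', enorm_eq_self]
  set A := ∫⁻ t, H t ^ p ∂μ
  have hpq : p.HolderConjugate p.conjExponent := .conjExponent hp
  rcases eq_or_ne A 0 with hA | hA
  · simp [hA, hpq.pos]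
  have hA_fin : A ^ (1 / p.conjExponent) ≠ ⊤ :=
    ENNReal.rpow_ne_top_of_nonneg hpq.symm.one_div_nonneg hfin
  have hF_swap : ∀ᵐ v ∂ν, AEMeasurable (F · v) μ :=
    hF.prod_swap.aestronglyMeasurable.prodMk_left.mono fun _ hv => hv.aemeasurable
  have key : A ^ (1 / p.conjExponent) * A ^ (1 / p) ≤
      A ^ (1 / p.conjExponent) * ∫⁻ v, (∫⁻ t, F t v ^ p ∂μ) ^ (1 / p) ∂ν :=
    calc
      A ^ (1 / p.conjExponent) * A ^ (1 / p) = A := by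
        rw [← ENNReal.rpow_add _ _ hA hfin, hpq.symm.one_div_add_one_div, div_one,
          ENNReal.rpow_one]
      _ ≤ ∫⁻ v, ∫⁻ t, F t v * H t ^ (p - 1) ∂μ ∂ν :=
        lintegral_rpow_le_lintegral_lintegral_mul_rpow hp.le hF hH hHF
      _ ≤ ∫⁻ v, (∫⁻ t, F t v ^ p ∂μ) ^ (1 / p) * A ^ (1 / p.conjExponent) ∂ν :=
        lintegral_mono_ae <| hF_swap.mono fun v hv =>
          ENNReal.lintegral_mul_rpow_le_lintegral_rpow_mul_lintegral_rpow hpq hv hH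
      _ = A ^ (1 / p.conjExponent) * ∫⁻ v, (∫⁻ t, F t v ^ p ∂μ) ^ (1 / p) ∂ν := by
        rw [lintegral_mul_const' _ _ hA_fin, mul_comm]
  exact (ENNReal.mul_le_mul_iff_right (ENNReal.rpow_pos (pos_iff_ne_zero.2 hA) hfin).ne'
    hA_fin).1 key

theorem eLpNorm'_lintegral_le_of_isFiniteMeasure [IsFiniteMeasure μ] [SFinite ν] (hp : 1 < p)
    (hF : AEMeasurable (Function.uncurry F) (μ.prod ν)) :
    eLpNorm' (fun t => ∫⁻ v, F t v ∂ν) p μ ≤ ∫⁻ v, eLpNorm' (F · v) p μ ∂ν := by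
  have hp0 : 0 < p := zero_lt_one.trans hp
  rw [eLpNorm', one_div, ENNReal.rpow_inv_le_iff hp0, lintegral_eq_nnreal]
  refine iSup₂_le fun φ hφ => ?_
  set ψ : SimpleFunc α ℝ≥0∞ := φ.map ((↑) : NNReal → ℝ≥0∞)
  set H : α → ℝ≥0∞ := fun t => ψ t ^ p⁻¹
  have hHp : ∫⁻ t, H t ^ p ∂μ = ψ.lintegral μ := by
    simp only [H, ENNReal.rpow_inv_rpow hp0.ne', ψ.lintegral_eq_lintegral]
  have hψ_fin : ψ.lintegral μ ≠ ⊤ :=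
    ((SimpleFunc.finMeasSupp_iff_support.2 (measure_lt_top μ _)).lintegral_lt_top
      (.of_forall fun _ => ENNReal.coe_ne_top)).ne
  have hHF (t : α) : H t ≤ ∫⁻ v, F t v ∂ν := (ENNReal.rpow_inv_le_iff hp0).2 (hφ t)
  have key := eLpNorm'_le_lintegral_eLpNorm'_of_le_lintegral hp hF
    (ψ.measurable.pow_const p⁻¹).aemeasurable hHF (hHp ▸ hψ_fin)
  rw [eLpNorm', one_div, ENNReal.rpow_inv_le_iff hp0] at key
  exact hHp ▸ key

theorem eLpNorm'_lintegral_le [SFinite μ] [SFinite ν] (hp : 1 ≤ p)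
    (hF : AEMeasurable (Function.uncurry F) (μ.prod ν)) :
    eLpNorm' (fun t => ∫⁻ v, F t v ∂ν) p μ ≤ ∫⁻ v, eLpNorm' (F · v) p μ ∂ν := by
  rcases hp.eq_or_lt with rfl | hp
  · simpa [eLpNorm'] using (lintegral_lintegral_swap hF).le
  have hp0 : 0 < p := zero_lt_one.trans hp
  rw [eLpNorm', one_div, ENNReal.rpow_inv_le_iff hp0]
  conv_lhs => rw [← sum_sfiniteSeq μ]
  rw [lintegral_sum_measure, ENNReal.tsum_eq_iSup_nat]
  refine iSup_le fun N => ?_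
  set μN : Measure α := ∑ i ∈ Finset.range N, sfiniteSeq μ i
  have hle : μN ≤ μ := Measure.le_intro fun t ht _ => by
    conv_rhs => rw [← sum_sfiniteSeq μ, Measure.sum_apply _ ht]
    simpa only [μN, Measure.coe_finsetSum, Finset.sum_apply] using ENNReal.sum_le_tsum _
  rw [← lintegral_finsetSum_measure, ← ENNReal.rpow_inv_le_iff hp0, ← one_div]
  calc
    eLpNorm' (fun t => ∫⁻ v, F t v ∂ν) p μN ≤ ∫⁻ v, eLpNorm' (F · v) p μN ∂ν :=
      eLpNorm'_lintegral_le_of_isFiniteMeasure hp (hF.mono_ac (hle.absolutelyContinuous.prod .rfl))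
    _ ≤ ∫⁻ v, eLpNorm' (F · v) p μ ∂ν :=
      lintegral_mono fun v => eLpNorm'_mono_measure _ hle hp0.le

end MinkowskiIntegral

/-- The measure `e^{ct} dt` on the half-line `(0,∞)`. For `c = pδ` its `L^p` norm is
`‖·‖_{0,p,δ,+}`, the exponential weight being carried by the measure instead of the function. -/
noncomputable def halfLineExpMeasure (c : ℝ) : Measure ℝ :=
  (volume.restrict (Ioi 0)).withDensity fun t => ENNReal.ofReal (Real.exp (c * t))

instance instSFiniteHalfLineExpMeasure (c : ℝ) : SFinite (halfLineExpMeasure c) := by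
  unfold halfLineExpMeasure
  infer_instance

theorem wnormPlus_eq_eLpNorm' {n : ℕ} {p δ : ℝ} (hp : 0 ≤ p) (f : ℝ → Fin n → ℂ) :
    wnormPlus n p δ f = eLpNorm' f p (halfLineExpMeasure (p * δ)) := by
  rw [wnormPlus, eLpNorm', halfLineExpMeasure,
    lintegral_withDensity_eq_lintegral_mul_non_measurable _ (by fun_prop) (by simp)]
  congr 1
  refine lintegral_congr fun t => ?_
  rw [Pi.mul_apply, ENNReal.ofReal_mul (Real.exp_pos _).le,
    ← ENNReal.ofReal_rpow_of_nonneg (norm_nonneg _) hp, ofReal_norm]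

section DifferenceQuotient

variable {E : Type*} [NormedAddCommGroup E] [NormedSpace ℝ E] [CompleteSpace E] {u : ℝ → E}

theorem enorm_sub_le_lintegral_deriv (hu : Differentiable ℝ u) {a b : ℝ} (hab : a ≤ b) :
    ‖u b - u a‖ₑ ≤ ∫⁻ x in Icc a b, ‖deriv u x‖ₑ := by
  by_cases hfin : ∫⁻ x in Icc a b, ‖deriv u x‖ₑ = ⊤
  · simp [hfin]
  have hint : IntegrableOn (deriv u) (Icc a b) :=
    ⟨aestronglyMeasurable_deriv u _, lt_top_iff_ne_top.2 hfin⟩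
  rw [← intervalIntegral.integral_deriv_eq_sub (fun x _ => hu x)
    ((intervalIntegrable_iff_integrableOn_Icc_of_le hab).2 hint),
    intervalIntegral.integral_of_le hab, ← integral_Icc_eq_integral_Ioc]
  exact enorm_integral_le_lintegral_enorm _

theorem enorm_sub_sub_smul_deriv_le (hu : Differentiable ℝ u) (x s : ℝ) :
    ‖u (x + s) - u x - s • deriv u x‖ₑ ≤
      ‖s‖ₑ * ∫⁻ v in Icc (0 : ℝ) 1, ‖deriv u (x + v * s) - deriv u x‖ₑ := by
  set w : ℝ → E := fun v => u (x + v * s) - v • s • deriv u x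
  have hw (v : ℝ) : HasDerivAt w (s • (deriv u (x + v * s) - deriv u x)) v := by
    have hlin : HasDerivAt (fun v : ℝ => x + v * s) s v := by
      simpa using ((hasDerivAt_id v).mul_const s).const_add x
    simpa [w, smul_sub] using! ((hu (x + v * s)).hasDerivAt.scomp v hlin).sub
      ((hasDerivAt_id v).smul_const (s • deriv u x))
  calc
    ‖u (x + s) - u x - s • deriv u x‖ₑ = ‖w 1 - w 0‖ₑ := by simp [w, sub_right_comm]
    _ ≤ ∫⁻ v in Icc (0 : ℝ) 1, ‖deriv w v‖ₑ :=
      enorm_sub_le_lintegral_deriv (fun v => (hw v).differentiableAt) zero_le_one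
    _ = ‖s‖ₑ * ∫⁻ v in Icc (0 : ℝ) 1, ‖deriv u (x + v * s) - deriv u x‖ₑ := by
      simp only [(hw _).deriv, enorm_smul]
      exact lintegral_const_mul' _ _ enorm_ne_top

theorem stmt7_general {μ : Measure ℝ} [SFinite μ] {p : ℝ} (hp : 1 ≤ p)
    (hu : Differentiable ℝ u) (R s : ℝ) :
    eLpNorm' (fun t => u (t + R + s) - u (t + R) - s • deriv u (t + R)) p μ ≤
      ENNReal.ofReal |s| * ∫⁻ v in Icc (0 : ℝ) 1,
        eLpNorm' (fun t => deriv u (t + v * s + R) - deriv u (t + R)) p μ := by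
  set F : ℝ → ℝ → ℝ≥0∞ := fun t v => ‖deriv u (t + v * s + R) - deriv u (t + R)‖ₑ
  have hF : Measurable (Function.uncurry F) := by
    have hu' := stronglyMeasurable_deriv u
    exact ((hu'.comp_measurable (by fun_prop)).sub (hu'.comp_measurable (by fun_prop))).enorm
  have htaylor (t : ℝ) : ‖u (t + R + s) - u (t + R) - s • deriv u (t + R)‖ₑ ≤
      ENNReal.ofReal |s| * ∫⁻ v in Icc (0 : ℝ) 1, F t v := by
    simpa only [Real.enorm_eq_ofReal_abs, add_right_comm t R] using
      enorm_sub_sub_smul_deriv_le hu (t + R) s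
  calc
    eLpNorm' (fun t => u (t + R + s) - u (t + R) - s • deriv u (t + R)) p μ
    _ ≤ ENNReal.ofReal |s| * eLpNorm' (fun t => ∫⁻ v in Icc (0 : ℝ) 1, F t v) p μ :=
      eLpNorm'_le_mul_eLpNorm'_of_ae_le_mul hF.lintegral_prod_right.aestronglyMeasurable
        (.of_forall htaylor) (zero_lt_one.trans_le hp)
    _ ≤ ENNReal.ofReal |s| * ∫⁻ v in Icc (0 : ℝ) 1, eLpNorm'
          (fun t => deriv u (t + v * s + R) - deriv u (t + R)) p μ := by
      gcongr
      simpa only [eLpNorm', F, enorm_eq_self] using eLpNorm'_lintegral_le hp hF.aemeasurable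

end DifferenceQuotient

/-- difference-quotient inequality of Lemmas 4.8/4.9. For `δ ∈ (0,1)`,
`p > 1`, `R > 0`, `u : ℝ → ℂⁿ` continuously differentiable with `‖u'‖_{0,p,δ,+} < ∞`,
and every `s` with `|s| < R`:
`‖u∘τ_{R+s} − u∘τ_R − s·u'∘τ_R‖_{0,p,δ,+} ≤ |s| ∫_0^1 ‖u'∘τ_{vs+R} − u'∘τ_R‖_{0,p,δ,+} dv`. -/
theorem stmt7 (n : ℕ) (δ p : ℝ) (hδ : δ ∈ Ioo (0:ℝ) 1) (hp : 1 < p) (R : ℝ) (hR : 0 < R)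
    (u : ℝ → (Fin n → ℂ)) (hu : ContDiff ℝ 1 u)
    (hu'fin : wnormPlus n p δ (deriv u) < ⊤)
    (s : ℝ) (hs : |s| < R) :
    wnormPlus n p δ (fun t => u (t + R + s) - u (t + R) - s • deriv u (t + R)) ≤
      ENNReal.ofReal |s| *
        ∫⁻ v in Icc (0:ℝ) 1,
          wnormPlus n p δ (fun t => deriv u (t + v * s + R) - deriv u (t + R)) := by
  simpa only [wnormPlus_eq_eLpNorm' (zero_le_one.trans hp.le)] using
    stmt7_general hp.le (hu.differentiable one_ne_zero) R s
end

section
/- Let β₋, β₊ : ℝ → ℝ be continuously differentiable with D(t) := β₋(t)² + β₊(t)² ≠ 0 for all t, and let R ∈ ℝ. For continuously differentiable u₋, u₊ : ℝ → ℂⁿ, define η₋(t) := β₋(t)·u₋(t−R) − β₊(t)·u₊(t+R) and η₊(t) := β₊(t)·u₋(t−R) + β₋(t)·u₊(t+R); define e(t) := −(β₋'(t)β₋(t) + β₊'(t)β₊(t))/D(t) and f(t) := −(β₋'(t)β₊(t) − β₊'(t)β₋(t))/D(t); set w₋(t) := η₋'(t) + e(t)η₋(t) + f(t)η₊(t) and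 w₊(t) := η₊'(t); and finally set v₋(t) := (β₋(t)w₋(t) + β₊(t)w₊(t))/D(t) and v₊(t) := (−β₊(t)w₋(t) + β₋(t)w₊(t))/D(t). Then for all t ∈ ℝ: v₋(t+R) = u₋'(t) + ((β₊β₊')/D)(t+R)·u₋(t) + ((β₊β₋')/D)(t+R)·u₊(t+2R), and v₊(t−R) = u₊'(t) + ((β₋β₊')/D)(t−R)·u₋(t−2R) + ((β₋β₋')/D)(t−R)·u₊(t). -/
/-
Let `x = (x₋, x₊) = (u₋(· - R), u₊(· + R))`. The product rule gives
`(T_β x)' = T_β x' + T_{β'} x`, and `ω` is chosen so that `ω T_β x` cancels exactly the first row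
of `T_{β'} x`. Hence `(∂_t + ω) T_β x = T_β x' + (0, β₊' x₋ + β₋' x₊)`; applying `T_β⁻¹` and
shifting back turns the first summand into `(u₋', u₊')` and the second into the error term.
-/

section Algebra

variable {K E : Type*} [Field K] [AddCommGroup E] [Module K E]

/-- The splicing matrix `T_b = [[b₋, -b₊], [b₊, b₋]]` acting on `E × E`, where `b = (b₋, b₊)`. -/
def splice (b : K × K) (x : E × E) : E × E :=
  (b.1 • x.1 - b.2 • x.2, b.2 • x.1 + b.1 • x.2)

/-- The inverse `T_b⁻¹` of the splicing matrix, by Cramer's rule; it is the zero map when the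
determinant `b₋ ^ 2 + b₊ ^ 2` vanishes. -/
def unsplice (b : K × K) (y : E × E) : E × E :=
  (b.1 ^ 2 + b.2 ^ 2)⁻¹ • (b.1 • y.1 + b.2 • y.2, -b.2 • y.1 + b.1 • y.2)

/-- The connection matrix `ω = -[[b₋', -b₊'], [0, 0]] T_b⁻¹`, where `b'` is the derivative of the
splicing coefficients. -/
def spliceConnection (b b' : K × K) (y : E × E) : E × E :=
  (-(splice b' (unsplice b y)).1, 0)

/-- The error term `T_b⁻¹ (0, b₊' x₋ + b₋' x₊)` of the conjugated derivative, as a function of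
the shifted pair `x = (x₋, x₊)`. -/
def spliceError (b b' : K × K) (x : E × E) : E × E :=
  unsplice b (0, (splice b' x).2)

theorem unsplice_add (b : K × K) (y z : E × E) :
    unsplice b (y + z) = unsplice b y + unsplice b z := by
  ext <;> simp only [unsplice, Prod.fst_add, Prod.snd_add, Prod.smul_fst, Prod.smul_snd] <;> module

theorem unsplice_splice {b : K × K} (hb : b.1 ^ 2 + b.2 ^ 2 ≠ 0) (x : E × E) :
    unsplice b (splice b x) = x := by
  ext <;> simp only [unsplice, splice, Prod.smul_fst, Prod.smul_snd] <;>
    match_scalars <;> field_simp <;> ring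

theorem splice_add_spliceConnection_splice {b : K × K} (hb : b.1 ^ 2 + b.2 ^ 2 ≠ 0) (b' : K × K)
    (x : E × E) :
    splice b' x + spliceConnection b b' (splice b x) = (0, (splice b' x).2) := by
  rw [spliceConnection, unsplice_splice hb]
  ext
  · exact add_neg_cancel _
  · exact add_zero _

theorem spliceConnection_eq (b b' : K × K) (y : E × E) :
    spliceConnection b b' y =
      ((-(b'.1 * b.1 + b'.2 * b.2) / (b.1 ^ 2 + b.2 ^ 2)) • y.1
        + (-(b'.1 * b.2 - b'.2 * b.1) / (b.1 ^ 2 + b.2 ^ 2)) • y.2, 0) := by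
  ext
  · simp only [spliceConnection, splice, unsplice, Prod.smul_fst, Prod.smul_snd]
    module
  · rfl

theorem spliceError_eq (b b' : K × K) (x : E × E) :
    spliceError b b' x =
      ((b.2 * b'.2 / (b.1 ^ 2 + b.2 ^ 2)) • x.1 + (b.2 * b'.1 / (b.1 ^ 2 + b.2 ^ 2)) • x.2,
        (b.1 * b'.2 / (b.1 ^ 2 + b.2 ^ 2)) • x.1 + (b.1 * b'.1 / (b.1 ^ 2 + b.2 ^ 2)) • x.2) := by
  ext <;> simp only [spliceError, splice, unsplice, Prod.smul_fst, Prod.smul_snd] <;> module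

end Algebra

section Shift

variable {G E F : Type*} [AddGroup G]

/-- The translation `(u₋, u₊) ↦ (u₋(· - R), u₊(· + R))` that precedes splicing. -/
def gluingShift (R : G) (u : G → E × F) (t : G) : E × F :=
  ((u (t - R)).1, (u (t + R)).2)

theorem gluingShift_neg_gluingShift (R : G) (u : G → E × F) :
    gluingShift (-R) (gluingShift R u) = u := by
  ext t <;> simp [gluingShift]

end Shift

section Gluing

variable {𝕜 E F : Type*} [NontriviallyNormedField 𝕜] [NormedAddCommGroup E] [NormedSpace 𝕜 E]
  [NormedAddCommGroup F] [NormedSpace 𝕜 F]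

/-- The total gluing map `T^R`, sending `u = (u₋, u₊)` to `η = (η₋, η₊)`. -/
def totalGluing (β : 𝕜 → 𝕜 × 𝕜) (R : 𝕜) (u : 𝕜 → E × E) (t : 𝕜) : E × E :=
  splice (β t) (gluingShift R u t)

/-- The inverse `(T^R)⁻¹` of the total gluing map: undo the splicing, then translate back. -/
def totalGluingInv (β : 𝕜 → 𝕜 × 𝕜) (R : 𝕜) (η : 𝕜 → E × E) : 𝕜 → E × E :=
  gluingShift (-R) fun t => unsplice (β t) (η t)

/-- The covariant derivative `∂_t + ω`. -/
noncomputable def covariantDeriv (β : 𝕜 → 𝕜 × 𝕜) (η : 𝕜 → E × E) (t : 𝕜) : E × E :=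
  deriv η t + spliceConnection (β t) (deriv β t) (η t)

theorem deriv_prodMk {f : 𝕜 → E} {g : 𝕜 → F} {t : 𝕜} (hf : DifferentiableAt 𝕜 f t)
    (hg : DifferentiableAt 𝕜 g t) :
    deriv (fun s => (f s, g s)) t = (deriv f t, deriv g t) :=
  (hf.hasDerivAt.prodMk hg.hasDerivAt).deriv

theorem hasDerivAt_splice {b : 𝕜 → 𝕜 × 𝕜} {b' : 𝕜 × 𝕜} {x : 𝕜 → E × E} {x' : E × E} {t : 𝕜}
    (hb : HasDerivAt b b' t) (hx : HasDerivAt x x' t) :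
    HasDerivAt (fun s => splice (b s) (x s)) (splice (b t) x' + splice b' (x t)) t := by
  have hb₁ : HasDerivAt (fun s => (b s).1) b'.1 t :=
    (ContinuousLinearMap.fst 𝕜 𝕜 𝕜).hasFDerivAt.comp_hasDerivAt t hb
  have hb₂ : HasDerivAt (fun s => (b s).2) b'.2 t :=
    (ContinuousLinearMap.snd 𝕜 𝕜 𝕜).hasFDerivAt.comp_hasDerivAt t hb
  have hx₁ : HasDerivAt (fun s => (x s).1) x'.1 t :=
    (ContinuousLinearMap.fst 𝕜 E E).hasFDerivAt.comp_hasDerivAt t hx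
  have hx₂ : HasDerivAt (fun s => (x s).2) x'.2 t :=
    (ContinuousLinearMap.snd 𝕜 E E).hasFDerivAt.comp_hasDerivAt t hx
  refine (((hb₁.smul hx₁).sub (hb₂.smul hx₂)).prodMk
    ((hb₂.smul hx₁).add (hb₁.smul hx₂))).congr_deriv ?_
  ext <;> simp only [splice, Prod.fst_add, Prod.snd_add] <;> module

theorem hasDerivAt_gluingShift {R t : 𝕜} {u : 𝕜 → E × F} (hm : DifferentiableAt 𝕜 u (t - R))
    (hp : DifferentiableAt 𝕜 u (t + R)) :
    HasDerivAt (gluingShift R u) (gluingShift R (deriv u) t) t :=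
  (hasFDerivAt_fst.comp_hasDerivAt t (hm.hasDerivAt.comp_sub_const t R)).prodMk
    (hasFDerivAt_snd.comp_hasDerivAt t (hp.hasDerivAt.comp_add_const t R))

theorem totalGluingInv_totalGluing {β : 𝕜 → 𝕜 × 𝕜} (hD : ∀ t, (β t).1 ^ 2 + (β t).2 ^ 2 ≠ 0)
    (R : 𝕜) (u : 𝕜 → E × E) : totalGluingInv β R (totalGluing β R u) = u := by
  simp only [totalGluingInv, totalGluing, unsplice_splice (hD _)]
  exact gluingShift_neg_gluingShift R u

theorem totalGluingInv_add (β : 𝕜 → 𝕜 × 𝕜) (R : 𝕜) (η ξ : 𝕜 → E × E) :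
    totalGluingInv β R (η + ξ) = totalGluingInv β R η + totalGluingInv β R ξ := by
  ext t <;> simp only [totalGluingInv, gluingShift, Pi.add_apply, unsplice_add, Prod.fst_add,
    Prod.snd_add]

theorem covariantDeriv_totalGluing {β : 𝕜 → 𝕜 × 𝕜} {R t : 𝕜} {u : 𝕜 → E × E}
    (hβ : DifferentiableAt 𝕜 β t) (hD : (β t).1 ^ 2 + (β t).2 ^ 2 ≠ 0)
    (hm : DifferentiableAt 𝕜 u (t - R)) (hp : DifferentiableAt 𝕜 u (t + R)) :
    covariantDeriv β (totalGluing β R u) t =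
      totalGluing β R (deriv u) t + (0, (splice (deriv β t) (gluingShift R u t)).2) := by
  have product_rule : deriv (totalGluing β R u) t =
      totalGluing β R (deriv u) t + splice (deriv β t) (gluingShift R u t) :=
    (hasDerivAt_splice hβ.hasDerivAt (hasDerivAt_gluingShift hm hp)).deriv
  rw [covariantDeriv, product_rule, add_assoc]
  exact congrArg _ (splice_add_spliceConnection_splice hD _ _)

theorem totalGluingInv_covariantDeriv_totalGluing {β : 𝕜 → 𝕜 × 𝕜} (hβ : Differentiable 𝕜 β)
    (hD : ∀ t, (β t).1 ^ 2 + (β t).2 ^ 2 ≠ 0) (R : 𝕜) {u : 𝕜 → E × E} (hu : Differentiable 𝕜 u) :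
    totalGluingInv β R (covariantDeriv β (totalGluing β R u)) =
      deriv u + gluingShift (-R) fun t => spliceError (β t) (deriv β t) (gluingShift R u t) := by
  have conj : covariantDeriv β (totalGluing β R u) =
      totalGluing β R (deriv u) + fun t => (0, (splice (deriv β t) (gluingShift R u t)).2) :=
    funext fun t => covariantDeriv_totalGluing (hβ t) (hD t) (hu _) (hu _)
  rw [conj, totalGluingInv_add, totalGluingInv_totalGluing hD]
  rfl

end Gluing

theorem stmt9_general {𝕜 E : Type*} [NontriviallyNormedField 𝕜] [NormedAddCommGroup E]
    [NormedSpace 𝕜 E] {βm βp : 𝕜 → 𝕜} (hβm : Differentiable 𝕜 βm) (hβp : Differentiable 𝕜 βp)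
    (hD : ∀ t : 𝕜, βm t ^ 2 + βp t ^ 2 ≠ 0) (R : 𝕜)
    {um up : 𝕜 → E} (hum : Differentiable 𝕜 um) (hup : Differentiable 𝕜 up) :
    let D : 𝕜 → 𝕜 := fun t => βm t ^ 2 + βp t ^ 2
    let ηm : 𝕜 → E := fun t => βm t • um (t - R) - βp t • up (t + R)
    let ηp : 𝕜 → E := fun t => βp t • um (t - R) + βm t • up (t + R)
    let e : 𝕜 → 𝕜 := fun t => -(deriv βm t * βm t + deriv βp t * βp t) / D t
    let f : 𝕜 → 𝕜 := fun t => -(deriv βm t * βp t - deriv βp t * βm t) / D t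
    let wm : 𝕜 → E := fun t => deriv ηm t + e t • ηm t + f t • ηp t
    let wp : 𝕜 → E := fun t => deriv ηp t
    let vm : 𝕜 → E := fun t => (D t)⁻¹ • (βm t • wm t + βp t • wp t)
    let vp : 𝕜 → E := fun t => (D t)⁻¹ • (-(βp t) • wm t + βm t • wp t)
    ∀ t : 𝕜,
      vm (t + R) = deriv um t
          + ((βp (t + R) * deriv βp (t + R)) / D (t + R)) • um t
          + ((βp (t + R) * deriv βm (t + R)) / D (t + R)) • up (t + 2 * R)
        ∧
      vp (t - R) = deriv up t
          + ((βm (t - R) * deriv βp (t - R)) / D (t - R)) • um (t - 2 * R)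
          + ((βm (t - R) * deriv βm (t - R)) / D (t - R)) • up t := by
  intro D ηm ηp e f wm wp vm vp t
  let β : 𝕜 → 𝕜 × 𝕜 := fun s => (βm s, βp s)
  let u : 𝕜 → E × E := fun s => (um s, up s)
  have deriv_β (s : 𝕜) : deriv β s = (deriv βm s, deriv βp s) := deriv_prodMk (hβm s) (hβp s)
  have deriv_u (s : 𝕜) : deriv u s = (deriv um s, deriv up s) := deriv_prodMk (hum s) (hup s)
  have deriv_η (s : 𝕜) : deriv (totalGluing β R u) s = (deriv ηm s, deriv ηp s) :=
    deriv_prodMk (by fun_prop) (by fun_prop)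
  have covariantDeriv_η (s : 𝕜) : covariantDeriv β (totalGluing β R u) s = (wm s, wp s) := by
    rw [covariantDeriv, deriv_η, deriv_β, spliceConnection_eq]
    exact Prod.ext (add_assoc _ _ _).symm (add_zero _)
  have inv_η : totalGluingInv β R (covariantDeriv β (totalGluing β R u)) t =
      (vm (t + R), vp (t - R)) := by
    simp only [totalGluingInv, gluingShift, covariantDeriv_η, sub_neg_eq_add, ← sub_eq_add_neg]
    rfl
  rw [totalGluingInv_covariantDeriv_totalGluing (β := β) (u := u) (hβm.prodMk hβp) hD R
    (hum.prodMk hup)] at inv_η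
  simp only [Pi.add_apply, gluingShift, spliceError_eq, deriv_β, deriv_u, sub_neg_eq_add,
    ← sub_eq_add_neg, add_sub_cancel_right, sub_add_cancel, add_assoc, sub_sub, ← two_mul,
    Prod.mk_add_mk, Prod.mk.injEq] at inv_η
  simpa only [add_assoc] using And.intro inv_η.1.symm inv_η.2.symm

/-- Lemma 3.2. Here `βm`, `βp` play the roles of `β₋`, `β₊`; `um`, `up`
of `u₋`, `u₊`; etc. The conjugation `Ψ^R_L = (T^R)^{-1} ∘ (∂_t + ω) ∘ T^R` of the covariant
derivative `∂_t + ω` by the total gluing map `T^R` equals `∂_t` plus the explicit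
zeroth-order error term; in particular there is no loss of differentiability. -/
theorem stmt9 (n : ℕ) (βm βp : ℝ → ℝ) (hβm : ContDiff ℝ 1 βm) (hβp : ContDiff ℝ 1 βp)
    (hD : ∀ t : ℝ, βm t ^ 2 + βp t ^ 2 ≠ 0) (R : ℝ)
    (um up : ℝ → (Fin n → ℂ)) (hum : ContDiff ℝ 1 um) (hup : ContDiff ℝ 1 up) :
    let D : ℝ → ℝ := fun t => βm t ^ 2 + βp t ^ 2
    let ηm : ℝ → (Fin n → ℂ) := fun t => βm t • um (t - R) - βp t • up (t + R)
    let ηp : ℝ → (Fin n → ℂ) := fun t => βp t • um (t - R) + βm t • up (t + R)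
    let e : ℝ → ℝ := fun t => -(deriv βm t * βm t + deriv βp t * βp t) / D t
    let f : ℝ → ℝ := fun t => -(deriv βm t * βp t - deriv βp t * βm t) / D t
    let wm : ℝ → (Fin n → ℂ) := fun t => deriv ηm t + e t • ηm t + f t • ηp t
    let wp : ℝ → (Fin n → ℂ) := fun t => deriv ηp t
    let vm : ℝ → (Fin n → ℂ) := fun t => (D t)⁻¹ • (βm t • wm t + βp t • wp t)
    let vp : ℝ → (Fin n → ℂ) := fun t => (D t)⁻¹ • (-(βp t) • wm t + βm t • wp t)
    ∀ t : ℝ,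
      vm (t + R) = deriv um t
          + ((βp (t + R) * deriv βp (t + R)) / D (t + R)) • um t
          + ((βp (t + R) * deriv βm (t + R)) / D (t + R)) • up (t + 2 * R)
        ∧
      vp (t - R) = deriv up t
          + ((βm (t - R) * deriv βp (t - R)) / D (t - R)) • um (t - 2 * R)
          + ((βm (t - R) * deriv βm (t - R)) / D (t - R)) • up t := by
  exact stmt9_general (hβm.differentiable one_ne_zero) (hβp.differentiable one_ne_zero) hD R
    (hum.differentiable one_ne_zero) (hup.differentiable one_ne_zero)
end

section
/- Let δ ∈ (0,1), p > 1, and let d, l > 0 with d > l and R ≥ d + l. Let g : ℝ → ℝ be bounded measurable with g(s) = 0 for all s outside the interval (−d−l, −d+l), and let u : ℝ → ℂⁿ be measurable with ‖u‖_{0,p,δ,−} := (∫_{−∞}^0 e^{−pδt} ‖u(t)‖^p dt)^{1/p} < ∞. Then (∫_0^∞ e^{pδt} ‖g(t−R)·u(t−2R)‖^p dt)^{1/p} ≤ e^{2δ(l−d)} · (sup_s |g(s)|) · ‖u‖_{0,p,δ,−}. -/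
open MeasureTheory Set
open scoped ENNReal

/-- The weighted `L^p` norm `‖f‖_{0,p,δ,−} = (∫_{−∞}^0 e^{−pδt} ‖f t‖^p dt)^{1/p}`
on the half-line `(−∞,0]`. -/
noncomputable def wnormMinus (n : ℕ) (p δ : ℝ) (f : ℝ → (Fin n → ℂ)) : ℝ≥0∞ :=
  (∫⁻ t in Iio (0:ℝ), ENNReal.ofReal (Real.exp (-(p * δ * t)) * ‖f t‖ ^ p)) ^ (1 / p)

/-!
A factor vanishing on `[b, ∞)` confines a function to `t < b`, where
`e^{δt} = e^{2δt} e^{-δt} ≤ e^{2δb} e^{-δt}`, so multiplying by it trades the growing weight for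
the decaying one at the cost `e^{2δb}`. Translating by `h` multiplies the norm with weight
`e^{-δt}` by `e^{-δh}`. With `b = R + (l - d)` and `h = 2R` the two factors combine to
`e^{2δ(l-d)}`, and the half-line `t < b` is translated to `t < l - d - R`, where `t < 0`.
-/

theorem eLpNorm_comp_sub_right_restrict {G ε : Type*} [AddGroup G] [MeasurableSpace G]
    [MeasurableAdd G] [TopologicalSpace ε] [ContinuousENorm ε] (μ : Measure G)
    [μ.IsAddRightInvariant] (f : G → ε) (p : ℝ≥0∞) (h : G) (s : Set G) :
    eLpNorm (fun t => f (t - h)) p (μ.restrict ((· - h) ⁻¹' s)) = eLpNorm f p (μ.restrict s) := by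
  have hemb : MeasurableEmbedding (· - h : G → G) := measurableEmbedding_subRight h
  have hmap : μ.map (· - h) = μ := (measurePreserving_sub_right μ h).map_eq
  conv_rhs => rw [← hmap, hemb.restrict_map, hemb.eLpNorm_map_measure]
  rfl

section ExponentialWeight

variable {E : Type*} [NormedAddCommGroup E] [NormedSpace ℝ E]

theorem eLpNorm_exp_smul_eq_lintegral {p : ℝ} (hp : 0 < p) (c : ℝ) (f : ℝ → E) (μ : Measure ℝ) :
    eLpNorm (fun t => Real.exp (c * t) • f t) (ENNReal.ofReal p) μ =
      (∫⁻ t, ENNReal.ofReal (Real.exp (p * c * t) * ‖f t‖ ^ p) ∂μ) ^ (1 / p) := by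
  have weight_rpow (t : ℝ) : ‖Real.exp (c * t) • f t‖ₑ ^ p =
      ENNReal.ofReal (Real.exp (p * c * t) * ‖f t‖ ^ p) := by
    rw [← ofReal_norm, ENNReal.ofReal_rpow_of_nonneg (norm_nonneg _) hp.le, norm_smul,
      Real.norm_of_nonneg (Real.exp_nonneg _),
      Real.mul_rpow (Real.exp_nonneg _) (norm_nonneg _), ← Real.exp_mul]
    ring_nf
  rw [eLpNorm_eq_lintegral_rpow_enorm_toReal (ENNReal.ofReal_pos.2 hp).ne' ENNReal.ofReal_ne_top,
    ENNReal.toReal_ofReal hp.le]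
  simp only [weight_rpow]

theorem eLpNorm_exp_smul_comp_sub_right (c : ℝ) (u : ℝ → E) (p : ℝ≥0∞) (h b : ℝ) :
    eLpNorm (fun t => Real.exp (c * t) • u (t - h)) p (volume.restrict (Iio b)) =
      ENNReal.ofReal (Real.exp (c * h)) *
        eLpNorm (fun t => Real.exp (c * t) • u t) p (volume.restrict (Iio (b - h))) := by
  have split_weight : (fun t => Real.exp (c * t) • u (t - h)) =
      Real.exp (c * h) • fun t => Real.exp (c * (t - h)) • u (t - h) := by
    funext t
    rw [Pi.smul_apply, smul_smul, ← Real.exp_add]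
    ring_nf
  have preimage_Iio : (· - h) ⁻¹' Iio (b - h) = Iio b := by
    ext t
    simp
  rw [split_weight, eLpNorm_const_smul, Real.enorm_of_nonneg (Real.exp_nonneg _), ← preimage_Iio,
    eLpNorm_comp_sub_right_restrict volume (fun t => Real.exp (c * t) • u t)]

variable {𝕜 : Type*} [SeminormedRing 𝕜] [Module 𝕜 E] [IsBoundedSMul 𝕜 E]

theorem eLpNorm_exp_smul_smul_le_of_forall_ge_eq_zero {δ b M : ℝ} (hδ : 0 ≤ δ) {g : ℝ → 𝕜}
    (hgM : ∀ t, ‖g t‖ ≤ M) (hg : ∀ t, b ≤ t → g t = 0) (v : ℝ → E) (p : ℝ≥0∞) (μ : Measure ℝ) :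
    eLpNorm (fun t => Real.exp (δ * t) • g t • v t) p μ ≤
      ENNReal.ofReal (Real.exp (2 * δ * b) * M) *
        eLpNorm (fun t => Real.exp (-δ * t) • v t) p (μ.restrict (Iio b)) := by
  have support_subset : Function.support (fun t => Real.exp (δ * t) • g t • v t) ⊆ Iio b := by
    refine Function.support_subset_iff'.2 fun t ht => ?_
    rw [hg t (not_lt.1 ht), zero_smul, smul_zero]
  have norm_le : ∀ t ∈ Iio b, ‖Real.exp (δ * t) • g t • v t‖ ≤
      Real.exp (2 * δ * b) * M * ‖Real.exp (-δ * t) • v t‖ := by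
    intro t ht
    have exp_le : Real.exp (δ * t) ≤ Real.exp (2 * δ * b) * Real.exp (-δ * t) := by
      rw [← Real.exp_add, Real.exp_le_exp]
      linarith [mul_le_mul_of_nonneg_left (mem_Iio.1 ht).le hδ]
    calc ‖Real.exp (δ * t) • g t • v t‖
        = Real.exp (δ * t) * ‖g t • v t‖ := by
          rw [norm_smul, Real.norm_of_nonneg (Real.exp_nonneg _)]
      _ ≤ (Real.exp (2 * δ * b) * Real.exp (-δ * t)) * (M * ‖v t‖) := by
          gcongr
          exact (norm_smul_le _ _).trans (by gcongr; exact hgM t)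
      _ = Real.exp (2 * δ * b) * M * ‖Real.exp (-δ * t) • v t‖ := by
          rw [norm_smul, Real.norm_of_nonneg (Real.exp_nonneg _)]
          ring
  rw [← eLpNorm_restrict_eq_of_support_subset support_subset]
  exact eLpNorm_le_mul_eLpNorm_of_ae_le_mul (ae_restrict_of_forall_mem measurableSet_Iio norm_le) p

theorem stmt10_general {δ a R M : ℝ} (hδ : 0 ≤ δ) (haR : a ≤ R) {g : ℝ → 𝕜}
    (hgM : ∀ s, ‖g s‖ ≤ M) (hg : ∀ s, a ≤ s → g s = 0) (u : ℝ → E) (p : ℝ≥0∞) :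
    eLpNorm (fun t => Real.exp (δ * t) • g (t - R) • u (t - 2 * R)) p volume ≤
      ENNReal.ofReal (Real.exp (2 * δ * a) * M) *
        eLpNorm (fun t => Real.exp (-δ * t) • u t) p (volume.restrict (Iio 0)) := by
  have constant_eq : ENNReal.ofReal (Real.exp (2 * δ * (R + a)) * M) *
      ENNReal.ofReal (Real.exp (-δ * (2 * R))) = ENNReal.ofReal (Real.exp (2 * δ * a) * M) := by
    rw [← ENNReal.ofReal_mul' (Real.exp_nonneg _), mul_right_comm, ← Real.exp_add]
    ring_nf
  calc eLpNorm (fun t => Real.exp (δ * t) • g (t - R) • u (t - 2 * R)) p volume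
      ≤ ENNReal.ofReal (Real.exp (2 * δ * (R + a)) * M) *
          eLpNorm (fun t => Real.exp (-δ * t) • u (t - 2 * R)) p
            (volume.restrict (Iio (R + a))) :=
        eLpNorm_exp_smul_smul_le_of_forall_ge_eq_zero hδ (fun t => hgM (t - R))
          (fun t ht => hg (t - R) (le_sub_iff_add_le'.2 ht)) (fun t => u (t - 2 * R)) p volume
    _ = ENNReal.ofReal (Real.exp (2 * δ * a) * M) *
          eLpNorm (fun t => Real.exp (-δ * t) • u t) p
            (volume.restrict (Iio (R + a - 2 * R))) := by
        rw [eLpNorm_exp_smul_comp_sub_right, ← mul_assoc, constant_eq]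
    _ ≤ ENNReal.ofReal (Real.exp (2 * δ * a) * M) *
          eLpNorm (fun t => Real.exp (-δ * t) • u t) p (volume.restrict (Iio 0)) := by
        have translated_le_zero : R + a - 2 * R ≤ 0 := by linarith
        gcongr

end ExponentialWeight

theorem wnormPlus_eq_eLpNorm {n : ℕ} {p : ℝ} (hp : 0 < p) (δ : ℝ) (f : ℝ → (Fin n → ℂ)) :
    wnormPlus n p δ f =
      eLpNorm (fun t => Real.exp (δ * t) • f t) (ENNReal.ofReal p) (volume.restrict (Ioi 0)) :=
  (eLpNorm_exp_smul_eq_lintegral hp δ f _).symm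

theorem wnormMinus_eq_eLpNorm {n : ℕ} {p : ℝ} (hp : 0 < p) (δ : ℝ) (f : ℝ → (Fin n → ℂ)) :
    wnormMinus n p δ f =
      eLpNorm (fun t => Real.exp (-δ * t) • f t) (ENNReal.ofReal p) (volume.restrict (Iio 0)) := by
  rw [eLpNorm_exp_smul_eq_lintegral hp]
  simp only [wnormMinus, mul_neg, neg_mul]

/-- Lemma 3.6. With `g` bounded by `M`, supported in `(−d−l, −d+l)`,
and `R ≥ d + l`:
`‖τ_{−R}g · τ_{−2R}u‖_{0,p,δ,+} ≤ e^{2δ(l−d)} (sup|g|) ‖u‖_{0,p,δ,−}`. -/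
theorem stmt10 (n : ℕ) (δ p d l R M : ℝ) (hδ : δ ∈ Ioo (0:ℝ) 1) (hp : 1 < p)
    (hd : 0 < d) (hl : 0 < l) (hld : l < d) (hR : d + l ≤ R)
    (g : ℝ → ℝ) (hg : Measurable g) (hgM : ∀ s, |g s| ≤ M)
    (hsupp : ∀ s, s ∉ Ioo (-d - l) (-d + l) → g s = 0)
    (u : ℝ → (Fin n → ℂ)) (hu : Measurable u)
    (hufin : wnormMinus n p δ u < ⊤) :
    wnormPlus n p δ (fun t => g (t - R) • u (t - 2 * R)) ≤
      ENNReal.ofReal (Real.exp (2 * δ * (l - d)) * M) * wnormMinus n p δ u := by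
  rw [wnormPlus_eq_eLpNorm (by linarith), wnormMinus_eq_eLpNorm (by linarith)]
  exact (eLpNorm_mono_measure _ Measure.restrict_le_self).trans <| stmt10_general hδ.1.le
    (by linarith) hgM (fun s hs => hsupp s fun hmem => by linarith [hmem.2]) u _
end
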